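/- arXiv:2012.15464 — 13 statements merged into one kernel-verified Lean document; each statement's English description precedes it below -/
import Mathlib

section
/- Let A be an n×n pseudo principal matrix. Then twice the rank of A is at least n, i.e., rank(A) ≥ n/2. -/
/-!
Join `i` to `j` by an edge when `i ≠ j` and `A i j > 0`; since `A` kills a positive vector `a`,
every vertex has an out-neighbour.

Maximum principle: if `A x = 0`, the set where `x i / a i` is maximal is closed under edges. Hence
if every vertex reaches a set `T`, a kernel vector vanishing on `T` is zero (apply this to `x` and
to `-x`), so the kernel has dimension at most `|T|`.

Take `T` minimal among such absorbing sets. By minimality no element of `T` reaches another one.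
So choosing an out-neighbour `f t` of each `t ∈ T` gives an injection of `T` into its complement:
if `f t = f t'` reaches `s ∈ T`, then `t = s = t'`. Thus `2 |T| ≤ n`, and rank-nullity concludes.
-/

/-- An `n × n` integer matrix is *pseudo principal* if its diagonal entries are negative,
its off-diagonal entries are nonnegative, and it kills some vector of positive integers. -/
def Matrix.IsPseudoPrincipal {n : ℕ} (A : Matrix (Fin n) (Fin n) ℤ) : Prop :=
  (∀ i, A i i < 0) ∧ (∀ i j, i ≠ j → 0 ≤ A i j) ∧
    ∃ a : Fin n → ℤ, (∀ i, 0 < a i) ∧ A.mulVec a = 0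

open Relation in
/-- In a finite loopless digraph without sinks, at most half of the vertices suffice to be reached
from everywhere. -/
lemma exists_small_absorbing {V : Type*} [Fintype V] [DecidableEq V] (r : V → V → Prop)
    (hirr : ∀ i, ¬ r i i) (hout : ∀ i, ∃ j, r i j) :
    ∃ T : Finset V, (∀ i, ∃ t ∈ T, ReflTransGen r i t) ∧ 2 * T.card ≤ Fintype.card V := by
  obtain ⟨T, hT, hmin⟩ := exists_minimal_of_wellFoundedLT
    (fun T : Finset V => ∀ i, ∃ t ∈ T, ReflTransGen r i t)
    ⟨Finset.univ, fun i => ⟨i, Finset.mem_univ i, .refl⟩⟩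
  have key : ∀ t ∈ T, ∀ s ∈ T, ReflTransGen r t s → t = s := by
    intro t ht s hs hts
    by_contra hne
    have hsub := hmin (y := T.erase t) (fun i => by
      obtain ⟨u, hu, hiu⟩ := hT i
      by_cases hut : u = t
      · subst hut
        exact ⟨s, Finset.mem_erase.2 ⟨Ne.symm hne, hs⟩, hiu.trans hts⟩
      · exact ⟨u, Finset.mem_erase.2 ⟨hut, hu⟩, hiu⟩) (Finset.erase_subset t T)
    exact Finset.notMem_erase t T (hsub ht)
  choose f hf using hout
  refine ⟨T, hT, ?_⟩
  have hle : T.card ≤ Tᶜ.card := by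
    refine Finset.card_le_card_of_injOn f ?_ ?_
    · intro t ht
      have ht' : t ∈ T := ht
      simp only [Finset.coe_compl, Set.mem_compl_iff, Finset.mem_coe]
      intro hft
      have h := hf t
      rw [← key t ht' _ hft (.single h)] at h
      exact hirr t h
    · intro t ht t' ht' h
      obtain ⟨s, hs, hr⟩ := hT (f t)
      rw [key t ht s hs (.head (hf t) hr), key t' ht' s hs (.head (hf t') (h ▸ hr))]
  have := Finset.card_add_card_compl T
  omega

open Relation in
/-- Maximum principle: a kernel vector that vanishes on an absorbing set is nonpositive. -/
lemma kernel_nonpos_of_absorbing {V : Type*} [Fintype V] (A : Matrix V V ℚ)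
    (hA : ∀ i j, i ≠ j → 0 ≤ A i j) (a : V → ℚ) (ha : ∀ i, 0 < a i) (hAa : A.mulVec a = 0)
    (T : Finset V) (hT : ∀ i, ∃ t ∈ T, ReflTransGen (fun i j => i ≠ j ∧ 0 < A i j) i t)
    (x : V → ℚ) (hx : A.mulVec x = 0) (hxT : ∀ t ∈ T, x t = 0) (i : V) : x i ≤ 0 := by
  obtain ⟨m, -, hm⟩ := Finset.exists_max_image Finset.univ (fun j => x j / a j)
    ⟨i, Finset.mem_univ i⟩
  have step : ∀ j k, x j / a j = x m / a m → (j ≠ k ∧ 0 < A j k) → x k / a k = x m / a m := by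
    intro j k hj ⟨_, hjk⟩
    have hsum : ∑ l, A j l * (a l * (x m / a m) - x l) = 0 := by
      have h1 : ∑ l, A j l * a l = 0 := congrFun hAa j
      have h2 : ∑ l, A j l * x l = 0 := congrFun hx j
      simp only [mul_sub, Finset.sum_sub_distrib, ← mul_assoc, ← Finset.sum_mul, h1, h2]
      simp
    have hnn : ∀ l ∈ Finset.univ, 0 ≤ A j l * (a l * (x m / a m) - x l) := by
      intro l _
      by_cases hjl : j = l
      · subst hjl
        rw [← hj, mul_div_cancel₀ _ (ha j).ne', sub_self, mul_zero]
      · refine mul_nonneg (hA j l hjl) (sub_nonneg.2 ?_)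
        have := (div_le_iff₀ (ha l)).1 (hm l (Finset.mem_univ l))
        linarith
    have h0 := (Finset.sum_eq_zero_iff_of_nonneg hnn).1 hsum k (Finset.mem_univ k)
    have h1 := (mul_eq_zero.1 h0).resolve_left hjk.ne'
    rw [div_eq_iff (ha k).ne']
    linarith
  obtain ⟨t, ht, hmt⟩ := hT m
  have hmax : x t / a t = x m / a m := by
    clear ht
    induction hmt with
    | refl => rfl
    | tail _ h ih => exact step _ _ ih h
  have hi := hm i (Finset.mem_univ i)
  rw [← hmax, hxT t ht, zero_div, div_le_iff₀ (ha i), zero_mul] at hi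
  exact hi

/-- a pseudo principal matrix has rank (over ℚ) at least `n / 2`. -/
theorem rank_ge_half_of_isPseudoPrincipal {n : ℕ} (A : Matrix (Fin n) (Fin n) ℤ)
    (hA : A.IsPseudoPrincipal) :
    n ≤ 2 * (A.map (Int.cast : ℤ → ℚ)).rank := by
  obtain ⟨hdiag, hoff, a, ha, hAa⟩ := hA
  set B : Matrix (Fin n) (Fin n) ℚ := A.map (Int.cast : ℤ → ℚ) with hB
  have hBoff : ∀ i j, i ≠ j → 0 ≤ B i j := fun i j h => by
    simpa [hB] using hoff i j h
  have hBa : B.mulVec (fun i => (a i : ℚ)) = 0 := by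
    ext i
    have h : ∑ j, A i j * a j = 0 := congrFun hAa i
    change ∑ j, (A i j : ℚ) * (a j : ℚ) = 0
    exact_mod_cast h
  have hout : ∀ i, ∃ j, i ≠ j ∧ 0 < B i j := by
    intro i
    by_contra! hno
    have h : ∑ j, A i j * a j = 0 := congrFun hAa i
    have hlt : ∑ j, A i j * a j < 0 := by
      refine Finset.sum_neg' (fun j _ => ?_) ⟨i, Finset.mem_univ i, ?_⟩
      · by_cases hij : i = j
        · subst hij
          exact (mul_neg_of_neg_of_pos (hdiag i) (ha i)).le
        · have : A i j ≤ 0 := by simpa [hB] using hno j hij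
          exact mul_nonpos_of_nonpos_of_nonneg this (ha j).le
      · exact mul_neg_of_neg_of_pos (hdiag i) (ha i)
    exact hlt.ne h
  obtain ⟨T, hT, hcard⟩ := exists_small_absorbing (fun i j => i ≠ j ∧ 0 < B i j)
    (fun i h => h.1 rfl) hout
  have hker : Module.finrank ℚ (LinearMap.ker B.mulVecLin) ≤ T.card := by
    let φ : LinearMap.ker B.mulVecLin →ₗ[ℚ] (T → ℚ) :=
      (LinearMap.funLeft ℚ ℚ (Subtype.val : T → Fin n)).comp (LinearMap.ker B.mulVecLin).subtype
    have hφ : Function.Injective φ := by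
      refine (injective_iff_map_eq_zero φ).2 fun ⟨x, hx⟩ h => ?_
      have hx0 : B.mulVec x = 0 := by simpa using hx
      have hxT : ∀ t ∈ T, x t = 0 := fun t ht => congrFun h ⟨t, ht⟩
      have hpos : ∀ i, (0 : ℚ) < a i := fun i => by exact_mod_cast ha i
      refine Subtype.ext (funext fun i => le_antisymm ?_ ?_)
      · exact kernel_nonpos_of_absorbing B hBoff _ hpos hBa T hT x hx0 hxT i
      · have := kernel_nonpos_of_absorbing B hBoff _ hpos hBa T hT (-x)
          (by rw [Matrix.mulVec_neg, hx0, neg_zero]) (fun t ht => by simp [hxT t ht]) i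
        simpa using this
    simpa using LinearMap.finrank_le_finrank_of_injective hφ
  have hrn := LinearMap.finrank_range_add_finrank_ker B.mulVecLin
  rw [Module.finrank_fin_fun] at hrn
  rw [Fintype.card_fin] at hcard
  change n ≤ 2 * Module.finrank ℚ (LinearMap.range B.mulVecLin)
  omega
end

section
/- Let A be an n×n pseudo principal matrix with A·a = 0 for a vector a of positive integers, and suppose rank(A) = n − p with p ≥ 2 (equivalently, rank(A) ≤ n − 2). Then there exist integers r_1, …, r_p ≥ 2 with r_1 + ⋯ + r_p ≤ n and a permutation σ of {1,…,n} such that, setting B_{ij} = A_{σ(i)σ(j)} and b_i = a_{σ(i)}, and letting I_1, …, I_p be the consecutive blocks of indices of sizes r_1, …, r_p starting at 1 (so I_1 = {1,…,r_1}, I_2 = {r_1+1,…,r_1+r_2}, and so on), one has B_{ij} = 0 whenever i ∈ I_k for some k ≤ p and j ∉ I_k. Consequently each diagonal block of B on I_k (k ≤ p) is an r_k × r_k pseudo principal matrix (its product with the positive vector (b_i)_{i ∈ I_k} is zero). Moreover, if A is a principal matrix of a, then each diagonal block of B on I_k is a principal matrix of the tuple (b_i)_{i ∈ I_k}. -/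
/-!
Call a set `C` of indices closed if the rows indexed by `C` vanish outside `C`. Closed sets are
stable under intersection, so distinct minimal nonempty closed sets are disjoint; each has at least
two elements, since a row with negative diagonal that kills a positive vector has another nonzero
entry.

The number of minimal nonempty closed sets is at least `dim ker A = p`. Indeed, if `A v = 0`, then
the indices where `v i / a i` is maximal form a closed set (maximum principle: in a row `i` where
the maximum `M` is attained, `∑ j, A i j * a j * (v j / a j - M) = 0` and all terms are `≤ 0`). This
set contains a minimal closed set, so if `v` vanishes at one chosen point of every minimal closed
set then `M ≤ 0`; applied to `v` and `-v` this gives `v = 0` (`nonpos_of_rep`). Evaluation at the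
chosen points is thus injective on the kernel.

Picking `p` minimal closed sets and a permutation `σ` carrying the consecutive blocks onto them
(`exists_perm_of_disjoint`) gives the vanishing statement, and the rest follows by restricting the
row identities `A a = 0` to the blocks.
-/


/-- `A` is a principal matrix of the tuple `a` of positive integers: `A·a = 0`,
off-diagonal entries are nonnegative, and each diagonal entry is `-c_i` where `c_i` is
the least positive integer with `c_i·a_i` in the submonoid of ℕ generated by the other
entries of `a`. -/
def IsPrincipalMatrix {n : ℕ} (A : Matrix (Fin n) (Fin n) ℤ) (a : Fin n → ℕ) : Prop :=
  (∀ i j, i ≠ j → 0 ≤ A i j) ∧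
    A.mulVec (fun i => (a i : ℤ)) = 0 ∧
    ∀ i, ∃ c : ℕ, A i i = -(c : ℤ) ∧
      IsLeast {m : ℕ | 0 < m ∧ m * a i ∈ AddSubmonoid.closure (a '' {j | j ≠ i})} c

/-- The starting position of the `k`-th consecutive block of sizes `r 0, r 1, …`. -/
def blockStart {p : ℕ} (r : Fin p → ℕ) (k : Fin p) : ℕ :=
  ∑ l ∈ Finset.univ.filter (fun l : Fin p => l < k), r l

/-- Membership of a (0-based) index `i` in the `k`-th consecutive block. -/
def inBlock {p : ℕ} (r : Fin p → ℕ) (k : Fin p) (i : ℕ) : Prop :=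
  blockStart r k ≤ i ∧ i < blockStart r k + r k

instance {p : ℕ} (r : Fin p → ℕ) (k : Fin p) (i : ℕ) : Decidable (inBlock r k i) :=
  inferInstanceAs (Decidable (_ ∧ _))

/-- The rows of `A` indexed by `C` vanish at all columns outside `C`. -/
def RowClosed {n : ℕ} (A : Matrix (Fin n) (Fin n) ℤ) (C : Finset (Fin n)) : Prop :=
  ∀ i ∈ C, ∀ j ∉ C, A i j = 0

/-- `C` is a minimal nonempty closed set of indices. -/
def MinClosed {n : ℕ} (A : Matrix (Fin n) (Fin n) ℤ) (C : Finset (Fin n)) : Prop :=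
  Minimal (fun D : Finset (Fin n) => D.Nonempty ∧ RowClosed A D) C

theorem MinClosed.nonempty {n : ℕ} {A : Matrix (Fin n) (Fin n) ℤ} {C : Finset (Fin n)}
    (h : MinClosed A C) : C.Nonempty := h.prop.1

theorem MinClosed.rowClosed {n : ℕ} {A : Matrix (Fin n) (Fin n) ℤ} {C : Finset (Fin n)}
    (h : MinClosed A C) : RowClosed A C := h.prop.2

theorem MinClosed.disjoint {n : ℕ} {A : Matrix (Fin n) (Fin n) ℤ} {C D : Finset (Fin n)}
    (hC : MinClosed A C) (hD : MinClosed A D) (hne : C ≠ D) : Disjoint C D := by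
  rw [Finset.disjoint_iff_inter_eq_empty]
  by_contra hcon
  have hprop : (C ∩ D).Nonempty ∧ RowClosed A (C ∩ D) := by
    refine ⟨Finset.nonempty_iff_ne_empty.mpr hcon, fun i hi j hj => ?_⟩
    rw [Finset.mem_inter] at hi hj
    by_cases hjC : j ∈ C
    · exact hD.rowClosed i hi.2 j fun hjD => hj ⟨hjC, hjD⟩
    · exact hC.rowClosed i hi.1 j hjC
  have h1 : C ⊆ C ∩ D := hC.le_of_le hprop Finset.inter_subset_left
  have h2 : D ⊆ C ∩ D := hD.le_of_le hprop Finset.inter_subset_right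
  exact hne (Finset.Subset.antisymm (h1.trans Finset.inter_subset_right)
    (h2.trans Finset.inter_subset_left))

theorem RowClosed.sum_eq_zero {n : ℕ} {A : Matrix (Fin n) (Fin n) ℤ} {a : Fin n → ℕ}
    (hAa : A.mulVec (fun i => (a i : ℤ)) = 0) {C : Finset (Fin n)} (hC : RowClosed A C)
    {i : Fin n} (hi : i ∈ C) : ∑ j ∈ C, A i j * (a j : ℤ) = 0 := by
  have h : ∑ j, A i j * (a j : ℤ) = 0 := congrFun hAa i
  rw [← h]
  refine Finset.sum_subset (Finset.subset_univ _) fun j _ hj => ?_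
  rw [hC i hi j hj, zero_mul]

theorem MinClosed.two_le_card {n : ℕ} {A : Matrix (Fin n) (Fin n) ℤ} {a : Fin n → ℕ}
    (hdiag : ∀ i, A i i < 0) (hapos : ∀ i, 0 < a i)
    (hAa : A.mulVec (fun i => (a i : ℤ)) = 0) {C : Finset (Fin n)} (hC : MinClosed A C) :
    2 ≤ C.card := by
  by_contra! hlt
  have h1 : C.card = 1 := by
    have := Finset.card_pos.mpr hC.nonempty
    omega
  obtain ⟨i, rfl⟩ := Finset.card_eq_one.mp h1
  have h := hC.rowClosed.sum_eq_zero hAa (Finset.mem_singleton_self i)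
  rw [Finset.sum_singleton] at h
  have := mul_neg_of_neg_of_pos (hdiag i) (Int.natCast_pos.mpr (hapos i))
  omega

/-- The maximum principle: a kernel vector vanishing at a point of each minimal closed set is
nonpositive. -/
theorem nonpos_of_rep {n : ℕ} {A : Matrix (Fin n) (Fin n) ℤ} {a : Fin n → ℕ}
    (hoff : ∀ i j, i ≠ j → 0 ≤ A i j)
    (hapos : ∀ i, 0 < a i) (hAa : A.mulVec (fun i => (a i : ℤ)) = 0) (v : Fin n → ℚ)
    (hv : ∀ i, ∑ j, (A i j : ℚ) * v j = 0)
    (hrep : ∀ C, MinClosed A C → ∃ i ∈ C, v i = 0) (i : Fin n) : v i ≤ 0 := by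
  have hpos : ∀ j, (0 : ℚ) < a j := fun j => by exact_mod_cast hapos j
  obtain ⟨m, -, hm⟩ := Finset.exists_max_image Finset.univ (fun j => v j / a j)
    ⟨i, Finset.mem_univ i⟩
  set M := v m / a m with hM
  have hle : ∀ j, v j - M * a j ≤ 0 := fun j => by
    have := (div_le_iff₀ (hpos j)).mp (hm j (Finset.mem_univ j))
    linarith
  let D : Finset (Fin n) := Finset.univ.filter fun j => v j - M * a j = 0
  have hD : D.Nonempty ∧ RowClosed A D := by
    refine ⟨⟨m, ?_⟩, fun k hk j hj => ?_⟩
    · have := (hpos m).ne'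
      simp only [D, Finset.mem_filter, Finset.mem_univ, true_and, hM]
      field_simp
      ring
    · simp only [D, Finset.mem_filter, Finset.mem_univ, true_and] at hk hj
      have hrow : ∑ l, (A k l : ℚ) * (a l : ℚ) = 0 := by
        have h : ∑ l, A k l * (a l : ℤ) = 0 := congrFun hAa k
        exact_mod_cast h
      have hsum : ∑ l, (A k l : ℚ) * (v l - M * a l) = 0 := by
        have : ∀ l, (A k l : ℚ) * (v l - M * a l) = A k l * v l - M * (A k l * a l) :=
          fun l => by ring
        simp only [this, Finset.sum_sub_distrib, ← Finset.mul_sum, hrow, hv k]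
        simp
      have hterm : ∀ l ∈ Finset.univ, (A k l : ℚ) * (v l - M * a l) ≤ 0 := fun l _ => by
        by_cases hkl : k = l
        · subst hkl
          rw [hk, mul_zero]
        · exact mul_nonpos_of_nonneg_of_nonpos (by exact_mod_cast hoff k l hkl) (hle l)
      have h0 := (Finset.sum_eq_zero_iff_of_nonpos hterm).mp hsum j (Finset.mem_univ j)
      exact_mod_cast (mul_eq_zero.mp h0).resolve_right hj
  obtain ⟨C, hCD, hC⟩ := exists_minimal_le_of_wellFoundedLT
    (fun D : Finset (Fin n) => D.Nonempty ∧ RowClosed A D) D hD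
  obtain ⟨c, hcC, hc⟩ := hrep C hC
  have hcD := hCD hcC
  simp only [D, Finset.mem_filter, Finset.mem_univ, true_and, hc] at hcD
  have hM0 : M = 0 := by
    have := (hpos c).ne'
    have h : M * a c = 0 := by linarith
    exact (mul_eq_zero.mp h).resolve_right this
  simpa [hM0] using hle i

theorem le_card_minClosed {n p : ℕ} {A : Matrix (Fin n) (Fin n) ℤ} {a : Fin n → ℕ}
    (hoff : ∀ i j, i ≠ j → 0 ≤ A i j)
    (hapos : ∀ i, 0 < a i) (hAa : A.mulVec (fun i => (a i : ℤ)) = 0)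
    (hrank : (A.map (Int.cast : ℤ → ℚ)).rank + p = n) :
    p ≤ Nat.card {C : Finset (Fin n) // MinClosed A C} := by
  classical
  let L := (A.map (Int.cast : ℤ → ℚ)).mulVecLin
  have hker : Module.finrank ℚ (LinearMap.ker L) = p := by
    have h := L.finrank_range_add_finrank_ker
    rw [Module.finrank_fin_fun] at h
    have h' : (A.map (Int.cast : ℤ → ℚ)).rank = Module.finrank ℚ (LinearMap.range L) := rfl
    omega
  let ev : (Fin n → ℚ) →ₗ[ℚ] ({C : Finset (Fin n) // MinClosed A C} → ℚ) :=
    LinearMap.funLeft ℚ ℚ fun C => C.2.nonempty.choose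
  have hinj : Function.Injective (ev.comp (LinearMap.ker L).subtype) := by
    rw [← LinearMap.ker_eq_bot, LinearMap.ker_eq_bot']
    rintro ⟨v, hv⟩ h
    have hv' : ∀ i, ∑ j, (A i j : ℚ) * v j = 0 := fun i => congrFun (LinearMap.mem_ker.mp hv) i
    have hrep : ∀ C, MinClosed A C → ∃ i ∈ C, v i = 0 := fun C hC =>
      ⟨_, hC.nonempty.choose_spec, congrFun h ⟨C, hC⟩⟩
    have h1 := nonpos_of_rep hoff hapos hAa v hv' hrep
    have h2 := nonpos_of_rep hoff hapos hAa (-v)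
      (fun i => by simpa using hv' i) (fun C hC => by simpa using hrep C hC)
    ext i
    have := h2 i
    simp only [Pi.neg_apply] at this
    simpa using le_antisymm (h1 i) (by linarith)
  have := LinearMap.finrank_le_finrank_of_injective hinj
  rwa [hker, Module.finrank_fintype_fun_eq_card, ← Nat.card_eq_fintype_card] at this

theorem blockStart_add_le {p : ℕ} (r : Fin p → ℕ) {k l : Fin p} (h : k < l) :
    blockStart r k + r k ≤ blockStart r l := by
  unfold blockStart
  rw [add_comm, ← Finset.sum_insert (by simp)]
  refine Finset.sum_le_sum_of_subset fun x hx => ?_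
  simp only [Finset.mem_insert, Finset.mem_filter, Finset.mem_univ, true_and] at hx ⊢
  rcases hx with rfl | hx
  exacts [h, hx.trans h]

theorem blockStart_add_le_sum {p : ℕ} (r : Fin p → ℕ) (k : Fin p) :
    blockStart r k + r k ≤ ∑ l, r l := by
  unfold blockStart
  rw [add_comm, ← Finset.sum_insert (by simp)]
  exact Finset.sum_le_sum_of_subset (Finset.subset_univ _)

/-- Disjoint sets of indices can be moved by a permutation to consecutive blocks. -/
theorem exists_perm_of_disjoint {n p : ℕ} (f : Fin p → Finset (Fin n))
    (hf : ∀ k l, k ≠ l → Disjoint (f k) (f l)) :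
    (∑ k, (f k).card) ≤ n ∧ ∃ σ : Equiv.Perm (Fin n), ∀ (k : Fin p) (i : Fin n),
      inBlock (fun l => (f l).card) k (i : ℕ) ↔ σ i ∈ f k := by
  classical
  set r : Fin p → ℕ := fun l => (f l).card with hr
  have hsum : ∑ k, r k ≤ n := by
    rw [hr, ← Finset.card_biUnion fun k _ l _ h => hf k l h]
    simpa using Finset.card_le_univ (Finset.univ.biUnion f)
  refine ⟨hsum, ?_⟩
  -- `g` enumerates the consecutive blocks and `h` the given sets.
  let g : (Σ k, Fin (r k)) → Fin n := fun x =>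
    ⟨blockStart r x.1 + x.2, by have := blockStart_add_le_sum r x.1; omega⟩
  let h : (Σ k, Fin (r k)) → Fin n := fun x => ((f x.1).equivFin.symm x.2 : f x.1)
  have hh : ∀ x, h x ∈ f x.1 := fun x => ((f x.1).equivFin.symm x.2).2
  have hg_inj : Function.Injective g := by
    rintro ⟨k, i⟩ ⟨l, j⟩ hx
    have hx' : blockStart r k + i = blockStart r l + j := congrArg Fin.val hx
    obtain rfl : k = l := by
      rcases lt_trichotomy k l with hkl | hkl | hkl
      · have := blockStart_add_le r hkl
        omega
      · exact hkl
      · have := blockStart_add_le r hkl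
        omega
    obtain rfl : i = j := by ext; omega
    rfl
  have hh_inj : Function.Injective h := by
    rintro ⟨k, i⟩ ⟨l, j⟩ hx
    obtain rfl : k = l := by
      by_contra hkl
      have h2 := hh ⟨l, j⟩
      rw [← hx] at h2
      exact Finset.disjoint_left.mp (hf k l hkl) (hh ⟨k, i⟩) h2
    obtain rfl : i = j := (f k).equivFin.symm.injective (Subtype.ext hx)
    rfl
  let e : {i // i ∈ Set.range g} ≃ {i // i ∈ Set.range h} :=
    (Equiv.ofInjective g hg_inj).symm.trans (Equiv.ofInjective h hh_inj)
  let σ : Equiv.Perm (Fin n) := e.extendSubtype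
  have hσ : ∀ x, σ (g x) = h x := fun x => by
    have h1 : σ (g x) = e ⟨g x, x, rfl⟩ := e.extendSubtype_apply_of_mem _ ⟨x, rfl⟩
    rw [h1]
    have h2 : (Equiv.ofInjective g hg_inj).symm ⟨g x, x, rfl⟩ = x :=
      Equiv.ofInjective_symm_apply hg_inj x
    simp only [e, Equiv.trans_apply, h2, Equiv.ofInjective_apply]
  refine ⟨σ, fun k i => ⟨fun hi => ?_, fun hi => ?_⟩⟩
  · obtain ⟨h1, h2⟩ := hi
    have hgi : g ⟨k, ⟨i - blockStart r k, by omega⟩⟩ = i := by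
      ext
      simp only [g]
      omega
    rw [← hgi, hσ]
    exact hh _
  · have hhx : h ⟨k, (f k).equivFin ⟨σ i, hi⟩⟩ = σ i := by simp [h]
    rw [← hσ] at hhx
    rw [← σ.injective hhx]
    simp only [g, inBlock]
    omega

/-- structure theorem for pseudo principal matrices of rank `n - p ≤ n - 2`.
After a permutation `σ`, the matrix `B = (A_{σ(i)σ(j)})` vanishes at every entry with row
in one of the `p` consecutive blocks `I₁,…,I_p` (of sizes `r₁,…,r_p ≥ 2`, `∑ r_k ≤ n`) and
column outside that block; each diagonal block on `I_k` is pseudo principal (it has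
negative diagonal, nonnegative off-diagonal entries, and kills the positive vector
`(a_{σ(i)})_{i ∈ I_k}`); and if `A` is a principal matrix of `a` then each diagonal block
is a principal matrix of `(a_{σ(i)})_{i ∈ I_k}`. -/
theorem structure_of_low_rank_pseudo_principal {n p : ℕ}
    (A : Matrix (Fin n) (Fin n) ℤ) (a : Fin n → ℕ)
    (hdiag : ∀ i, A i i < 0) (hoff : ∀ i j, i ≠ j → 0 ≤ A i j)
    (hapos : ∀ i, 0 < a i) (hAa : A.mulVec (fun i => (a i : ℤ)) = 0)
    (hp : 2 ≤ p) (hrank : (A.map (Int.cast : ℤ → ℚ)).rank + p = n) :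
    ∃ (r : Fin p → ℕ) (σ : Equiv.Perm (Fin n)),
      (∀ k, 2 ≤ r k) ∧ (∑ k, r k) ≤ n ∧
      -- block rows vanish outside their own block
      (∀ (k : Fin p) (i j : Fin n), inBlock r k (i : ℕ) → ¬ inBlock r k (j : ℕ) →
        A (σ i) (σ j) = 0) ∧
      -- each diagonal block is pseudo principal: it kills the positive vector
      -- `(a_{σ(j)})_{j ∈ I_k}` (its diagonal is negative and its off-diagonal entries
      -- are nonnegative, being entries of `A`)
      (∀ (k : Fin p) (i : Fin n), inBlock r k (i : ℕ) →
        ∑ j ∈ Finset.univ.filter (fun j : Fin n => inBlock r k (j : ℕ)),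
          A (σ i) (σ j) * (a (σ j) : ℤ) = 0) ∧
      -- if `A` is principal, each diagonal block is a principal matrix of the
      -- corresponding subtuple of `a`
      (IsPrincipalMatrix A a →
        ∀ (k : Fin p) (i : Fin n), inBlock r k (i : ℕ) →
          ∃ c : ℕ, A (σ i) (σ i) = -(c : ℤ) ∧
            IsLeast {m : ℕ | 0 < m ∧ m * a (σ i) ∈
              AddSubmonoid.closure ((fun j => a (σ j)) ''
                {j : Fin n | inBlock r k (j : ℕ) ∧ j ≠ i})} c) := by
  classical
  have : Fintype {C : Finset (Fin n) // MinClosed A C} := Fintype.ofFinite _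
  have hcard := le_card_minClosed hoff hapos hAa hrank
  rw [Nat.card_eq_fintype_card, ← Fintype.card_fin p] at hcard
  obtain ⟨F⟩ := Function.Embedding.nonempty_of_card_le hcard
  let f : Fin p → Finset (Fin n) := fun k => (F k).1
  have hf : ∀ k, MinClosed A (f k) := fun k => (F k).2
  obtain ⟨hsum, σ, hσ⟩ := exists_perm_of_disjoint f fun k l hkl =>
    (hf k).disjoint (hf l) fun h => hkl (F.injective (Subtype.ext h))
  have hblock : ∀ (k : Fin p) (i : Fin n), inBlock (fun l => (f l).card) k (i : ℕ) →
      ∑ j ∈ Finset.univ.filter (fun j : Fin n => inBlock (fun l => (f l).card) k (j : ℕ)),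
        A (σ i) (σ j) * (a (σ j) : ℤ) = 0 := fun k i hi => by
    rw [← (hf k).rowClosed.sum_eq_zero hAa ((hσ k i).mp hi)]
    refine Finset.sum_equiv σ (fun j => ?_) fun j _ => rfl
    simpa using hσ k j
  refine ⟨fun l => (f l).card, σ, fun k => (hf k).two_le_card hdiag hapos hAa, hsum,
    fun k i j hi hj => ?_, hblock, ?_⟩
  · exact (hf k).rowClosed _ ((hσ k i).mp hi) _ fun h => hj ((hσ k j).mpr h)
  rintro ⟨-, -, hprin⟩ k i hi
  obtain ⟨c, hc, ⟨hcpos, -⟩, hmin⟩ := hprin (σ i)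
  refine ⟨c, hc, ⟨hcpos, ?_⟩, fun m ⟨hm, hmem⟩ => hmin ⟨hm, ?_⟩⟩
  · have h := hblock k i hi
    rw [← Finset.add_sum_erase _ _ (a := i) (by simpa using hi), hc] at h
    have hnat : c * a (σ i) = ∑ j ∈ (Finset.univ.filter (fun j : Fin n =>
        inBlock (fun l => (f l).card) k (j : ℕ))).erase i,
          (A (σ i) (σ j)).toNat * a (σ j) := by
      zify
      rw [Finset.sum_congr rfl (g := fun j => A (σ i) (σ j) * (a (σ j) : ℤ))]
      · linarith
      · intro j hj
        have hne : σ i ≠ σ j := fun h => (Finset.ne_of_mem_erase hj) (σ.injective h).symm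
        rw [Int.toNat_of_nonneg (hoff _ _ hne)]
    rw [hnat]
    refine AddSubmonoid.sum_mem _ fun j hj => ?_
    rw [← smul_eq_mul]
    refine AddSubmonoid.nsmul_mem _ ?_ _
    refine AddSubmonoid.subset_closure ⟨j, ?_, rfl⟩
    simpa [and_comm] using hj
  · refine AddSubmonoid.closure_mono ?_ hmem
    rintro _ ⟨j, ⟨-, hji⟩, rfl⟩
    exact ⟨σ j, fun h => hji (σ.injective h), rfl⟩
end

section
/- Let A be an n×n pseudo principal matrix of rank n−1, and suppose some principal minor of A of size n−1 vanishes (Δ_I = 0 for some I with |I| = n−1). Then there exist a permutation σ of {1,…,n} and an integer s with 1 ≤ s ≤ n−1 such that the matrix B with B_{ij} = A_{σ(i)σ(j)} satisfies B_{ij} = 0 for all i ≤ n−s and all j > n−s, and the top-left (n−s)×(n−s) block of B is a pseudo principal matrix of rank n−s−1. -/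
/-- `Δ_I`: the principal minor of `A` on the rows and columns in `I`. -/
def pminor {n : ℕ} (A : Matrix (Fin n) (Fin n) ℤ) (I : Finset (Fin n)) : ℤ :=
  (A.submatrix (fun i : {x : Fin n // x ∈ I} => (i : Fin n))
    (fun j : {x : Fin n // x ∈ I} => (j : Fin n))).det

/-- `S` is closed for `M`: the entries with row index in `S` and column index outside `S` vanish. -/
def IsClosedFor {ι R : Type*} [Zero R] (M : Matrix ι ι R) (S : Finset ι) : Prop :=
  ∀ i ∈ S, ∀ j ∉ S, M i j = 0

/-- The discrete maximum principle: if the ratio `x / a` is maximal at `i` and `(M x) i = 0`, then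
`M i j = 0` for every `j` at which the ratio is not maximal. -/
lemma eq_zero_of_ratio_max {ι : Type*} [Fintype ι] (M : Matrix ι ι ℚ)
    (hoff : ∀ i j, i ≠ j → 0 ≤ M i j) (a : ι → ℚ) (hMa : M.mulVec a = 0)
    (x : ι → ℚ) (c : ℚ) (hc : ∀ j, x j ≤ c * a j) (i : ι) (hi : x i = c * a i)
    (hMx : M.mulVec x i = 0) (j : ι) (hj : x j ≠ c * a j) : M i j = 0 := by
  have hsum : ∑ l, M i l * (c * a l - x l) = 0 := by
    have h1 : ∑ l, M i l * a l = 0 := congrFun hMa i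
    have h2 : ∑ l, M i l * x l = 0 := hMx
    calc ∑ l, M i l * (c * a l - x l) = c * ∑ l, M i l * a l - ∑ l, M i l * x l := by
          rw [Finset.mul_sum, ← Finset.sum_sub_distrib]
          exact Finset.sum_congr rfl fun l _ => by ring
      _ = 0 := by rw [h1, h2]; ring
  have hnn : ∀ l ∈ Finset.univ, 0 ≤ M i l * (c * a l - x l) := by
    intro l _
    by_cases hl : i = l
    · subst hl
      simp [hi]
    · exact mul_nonneg (hoff i l hl) (sub_nonneg.2 (hc l))
  have h0 := (Finset.sum_eq_zero_iff_of_nonneg hnn).1 hsum j (Finset.mem_univ j)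
  exact (mul_eq_zero.1 h0).resolve_right fun h => hj (by linarith)

lemma exists_ratio_max {ι : Type*} [Fintype ι] [Nonempty ι] (a x : ι → ℚ) (ha : ∀ i, 0 < a i) :
    ∃ m, ∀ j, x j ≤ x m / a m * a j := by
  obtain ⟨m, -, hm⟩ := Finset.exists_max_image Finset.univ (fun j => x j / a j)
    Finset.univ_nonempty
  exact ⟨m, fun j => (div_le_iff₀ (ha j)).1 (hm j (Finset.mem_univ j))⟩

lemma rank_eq_of_closed_eq_univ {ι : Type*} [Fintype ι] [DecidableEq ι] [Nonempty ι]
    (M : Matrix ι ι ℚ) (hoff : ∀ i j, i ≠ j → 0 ≤ M i j) (a : ι → ℚ) (ha : ∀ i, 0 < a i)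
    (hMa : M.mulVec a = 0)
    (hirr : ∀ T : Finset ι, T.Nonempty → IsClosedFor M T → T = Finset.univ) :
    M.rank = Fintype.card ι - 1 := by
  have hker : Module.finrank ℚ (LinearMap.ker M.mulVecLin) = 1 := by
    refine finrank_eq_one ⟨a, by simpa using hMa⟩ ?_ ?_
    · intro h
      have h' : a = 0 := congrArg Subtype.val h
      obtain ⟨i⟩ := ‹Nonempty ι›
      exact (ha i).ne' (congrFun h' i)
    · rintro ⟨x, hx⟩
      have hMx : M.mulVec x = 0 := by simpa using hx
      obtain ⟨m, hm⟩ := exists_ratio_max a x ha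
      have hT := hirr (Finset.univ.filter fun j => x j = x m / a m * a j)
        ⟨m, by simp [(ha m).ne']⟩ (by
          intro i hi j hj
          exact eq_zero_of_ratio_max M hoff a hMa x _ hm i (by simpa using hi)
            (congrFun hMx i) j (by simpa using hj))
      refine ⟨x m / a m, Subtype.ext (funext fun j => ?_)⟩
      have hj : j ∈ Finset.univ.filter fun j => x j = x m / a m * a j := by
        rw [hT]; exact Finset.mem_univ j
      exact (Finset.mem_filter.1 hj).2.symm
  have h := M.mulVecLin.finrank_range_add_finrank_ker
  rw [hker, Module.finrank_fintype_fun_eq_card] at h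
  rw [Matrix.rank]
  omega

/-- A vector with a positive entry which vanishes at `k`, and whose image vanishes away from `k`,
yields a nonempty closed set avoiding `k`: the set where its ratio to `a` is maximal. -/
lemma exists_closed_of_pos {ι : Type*} [Fintype ι] [DecidableEq ι]
    (M : Matrix ι ι ℚ) (hoff : ∀ i j, i ≠ j → 0 ≤ M i j) (a : ι → ℚ) (ha : ∀ i, 0 < a i)
    (hMa : M.mulVec a = 0) (k : ι) (x : ι → ℚ) (hxk : x k = 0)
    (hMx : ∀ i, i ≠ k → M.mulVec x i = 0) (hpos : ∃ p, 0 < x p) :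
    ∃ Z : Finset ι, Z.Nonempty ∧ k ∉ Z ∧ IsClosedFor M Z := by
  have : Nonempty ι := ⟨k⟩
  obtain ⟨m, hm⟩ := exists_ratio_max a x ha
  obtain ⟨p, hp⟩ := hpos
  have hc : 0 < x m / a m := pos_of_mul_pos_left (hp.trans_le (hm p)) (ha p).le
  have hk : k ∉ Finset.univ.filter fun j => x j = x m / a m * a j := by
    simp only [Finset.mem_filter, Finset.mem_univ, true_and, hxk]
    exact (mul_pos hc (ha k)).ne
  refine ⟨_, ⟨m, by simp [(ha m).ne']⟩, hk, fun i hi j hj => ?_⟩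
  exact eq_zero_of_ratio_max M hoff a hMa x _ hm i (by simpa using hi)
    (hMx i fun h => hk (h ▸ hi)) j (by simpa using hj)

lemma exists_closed_of_pminor_eq_zero {n : ℕ} (A : Matrix (Fin n) (Fin n) ℤ)
    (hoff : ∀ i j, i ≠ j → 0 ≤ A i j) (a : Fin n → ℤ) (ha : ∀ i, 0 < a i)
    (hAa : A.mulVec a = 0) (I : Finset (Fin n)) (hI : I.card = n - 1) (hmin : pminor A I = 0) :
    ∃ Z : Finset (Fin n), Z.Nonempty ∧ Z.card < n ∧ IsClosedFor A Z := by
  obtain ⟨v, hv0, hv⟩ := Matrix.exists_mulVec_eq_zero_iff.2 hmin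
  obtain ⟨p, hp⟩ := Function.ne_iff.1 hv0
  have hn : 0 < n := p.1.pos
  obtain ⟨k, hk⟩ : ∃ k, Iᶜ = {k} := Finset.card_eq_one.1 (by
    rw [Finset.card_compl, Fintype.card_fin, hI]; omega)
  have hkI : ∀ i, i ∉ I ↔ i = k := fun i => by
    rw [← Finset.mem_compl, hk, Finset.mem_singleton]
  -- The extension of the kernel vector by zero at `k`.
  set x : Fin n → ℚ := fun i => if h : i ∈ I then (v ⟨i, h⟩ : ℚ) else 0 with hx
  have hxk : x k = 0 := by simp [hx, (hkI k).2 rfl]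
  have hAx : ∀ i, i ≠ k → (A.map (Int.cast : ℤ → ℚ)).mulVec x i = 0 := by
    intro i hi
    have hiI : i ∈ I := by by_contra h; exact hi ((hkI i).1 h)
    have h1 : ∑ j : {y // y ∈ I}, A i j * v j = 0 := congrFun hv ⟨i, hiI⟩
    have h2 : ∑ j ∈ I, (A i j : ℚ) * x j = ∑ j : {y // y ∈ I}, (A i j : ℚ) * (v j : ℚ) := by
      rw [← Finset.sum_coe_sort I]
      exact Finset.sum_congr rfl fun j _ => by simp [hx]
    have h3 : ∑ j, (A i j : ℚ) * x j = ∑ j ∈ I, (A i j : ℚ) * x j := by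
      symm
      refine Finset.sum_subset (Finset.subset_univ I) fun j _ hj => ?_
      simp [hx, hj]
    change ∑ j, (A i j : ℚ) * x j = 0
    rw [h3, h2]
    exact_mod_cast h1
  have hMa : (A.map (Int.cast : ℤ → ℚ)).mulVec (fun i => (a i : ℚ)) = 0 := by
    funext i
    have h1 : ∑ j, A i j * a j = 0 := congrFun hAa i
    change ∑ j, (A i j : ℚ) * (a j : ℚ) = 0
    exact_mod_cast h1
  have hxp : x p ≠ 0 := by simpa [hx] using hp
  have key : ∃ Z : Finset (Fin n), Z.Nonempty ∧ k ∉ Z ∧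
      IsClosedFor (A.map (Int.cast : ℤ → ℚ)) Z := by
    have hoff' : ∀ i j, i ≠ j → 0 ≤ A.map (Int.cast : ℤ → ℚ) i j := fun i j hij => by
      simpa using hoff i j hij
    have ha' : ∀ i, (0 : ℚ) < a i := fun i => by exact_mod_cast ha i
    rcases lt_or_gt_of_ne hxp with h | h
    · refine exists_closed_of_pos _ hoff' _ ha' hMa k (-x) (by simp [hxk]) (fun i hi => ?_)
        ⟨p, by simpa using h⟩
      rw [Matrix.mulVec_neg, Pi.neg_apply, hAx i hi, neg_zero]
    · exact exists_closed_of_pos _ hoff' _ ha' hMa k x hxk hAx ⟨p, h⟩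
  obtain ⟨Z, hZ, hkZ, hcl⟩ := key
  refine ⟨Z, hZ, ?_, fun i hi j hj => by simpa using hcl i hi j hj⟩
  simpa using Finset.card_lt_univ_of_notMem hkZ

lemma exists_perm_mem_iff {n : ℕ} (S : Finset (Fin n)) (k : ℕ) (hk : k = S.card) :
    ∃ σ : Equiv.Perm (Fin n), ∀ i, σ i ∈ S ↔ (i : ℕ) < k := by
  have hkn : k ≤ n := by simpa [hk] using Finset.card_le_univ S
  have hcard : Fintype.card {i : Fin n // (i : ℕ) < k} = Fintype.card {i : Fin n // i ∈ S} := by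
    rw [Fintype.card_coe, ← hk, Fintype.card_subtype]
    simp [Fin.card_filter_val_lt, hkn]
  let e := Fintype.equivOfCardEq hcard
  refine ⟨e.extendSubtype, fun i => ⟨fun h => ?_, fun h => e.extendSubtype_mem i h⟩⟩
  by_contra hi
  exact e.extendSubtype_not_mem i hi h

/-- if a pseudo principal matrix `A` has rank `n - 1` and some principal
minor of size `n - 1` vanishes, then after a permutation `σ` of the indices the matrix
`B = (A_{σ(i)σ(j)})` has a zero top-right `(n-s) × s` block for some `1 ≤ s ≤ n - 1`,
and its top-left `(n-s) × (n-s)` block is a pseudo principal matrix of rank `n - s - 1`. -/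
theorem structure_of_rank_sub_one_with_vanishing_pminor {n : ℕ}
    (A : Matrix (Fin n) (Fin n) ℤ) (hA : A.IsPseudoPrincipal)
    (hrank : (A.map (Int.cast : ℤ → ℚ)).rank = n - 1)
    (hmin : ∃ I : Finset (Fin n), I.card = n - 1 ∧ pminor A I = 0) :
    ∃ (σ : Equiv.Perm (Fin n)) (s : ℕ), 1 ≤ s ∧ s ≤ n - 1 ∧
      (∀ i j : Fin n, (i : ℕ) < n - s → n - s ≤ (j : ℕ) → A (σ i) (σ j) = 0) ∧
      (Matrix.of fun i j : Fin (n - s) =>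
        A (σ (Fin.castLE (Nat.sub_le n s) i)) (σ (Fin.castLE (Nat.sub_le n s) j))).IsPseudoPrincipal ∧
      ((Matrix.of fun i j : Fin (n - s) =>
        A (σ (Fin.castLE (Nat.sub_le n s) i)) (σ (Fin.castLE (Nat.sub_le n s) j))).map
          (Int.cast : ℤ → ℚ)).rank = n - s - 1 := by
  classical
  obtain ⟨hdiag, hoff, a, ha, hAa⟩ := hA
  obtain ⟨I, hI, hmin⟩ := hmin
  obtain ⟨Z, hZ, hZn, hZcl⟩ := exists_closed_of_pminor_eq_zero A hoff a ha hAa I hI hmin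
  obtain ⟨S, hS, hSmin⟩ := Finset.exists_min_image
    (Finset.univ.filter fun T : Finset (Fin n) => T.Nonempty ∧ IsClosedFor A T) Finset.card
    ⟨Z, by simp [hZ, hZcl]⟩
  simp only [Finset.mem_filter, Finset.mem_univ, true_and] at hS hSmin
  obtain ⟨hSne, hScl⟩ := hS
  have hSn : S.card < n := (hSmin Z ⟨hZ, hZcl⟩).trans_lt hZn
  have hSpos : 0 < S.card := hSne.card_pos
  obtain ⟨s, hs⟩ : ∃ s, s = n - S.card := ⟨_, rfl⟩
  have hns : n - s = S.card := by omega
  obtain ⟨σ, hσ⟩ := exists_perm_mem_iff S (n - s) hns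
  have hzero : ∀ i j : Fin n, (i : ℕ) < n - s → n - s ≤ (j : ℕ) → A (σ i) (σ j) = 0 :=
    fun i j hi hj => hScl _ ((hσ i).2 hi) _ fun h => by have := (hσ j).1 h; omega
  set c : Fin (n - s) → Fin n := Fin.castLE (Nat.sub_le n s) with hc
  have hcinj : Function.Injective c := Fin.castLE_injective _
  have hclt : ∀ i, (c i : ℕ) < n - s := fun i => i.2
  have hcsurj : ∀ j : Fin n, (j : ℕ) < n - s → ∃ i, c i = j := fun j hj => ⟨⟨j, hj⟩, rfl⟩
  set B : Matrix (Fin (n - s)) (Fin (n - s)) ℤ := Matrix.of fun i j => A (σ (c i)) (σ (c j)) with hB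
  have hBoff : ∀ i j, i ≠ j → 0 ≤ B i j := fun i j hij =>
    hoff _ _ fun h => hij (hcinj (σ.injective h))
  have hBa : B.mulVec (fun i => a (σ (c i))) = 0 := by
    funext i
    have h1 : ∑ j, A (σ (c i)) j * a j = 0 := congrFun hAa (σ (c i))
    rw [← Equiv.sum_comp σ] at h1
    change ∑ j, A (σ (c i)) (σ (c j)) * a (σ (c j)) = 0
    rw [← h1]
    -- The columns outside the range of `c` contribute nothing, by the zero block.
    refine Finset.sum_of_injOn c hcinj.injOn (by simp) (fun j _ hj => ?_) fun _ _ => rfl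
    rw [hzero (c i) j (hclt i), zero_mul]
    by_contra! h
    obtain ⟨l, rfl⟩ := hcsurj j h
    exact hj ⟨l, by simp, rfl⟩
  refine ⟨σ, s, by omega, by omega, hzero,
    ⟨fun i => hdiag _, hBoff, _, fun i => ha _, hBa⟩, ?_⟩
  have : Nonempty (Fin (n - s)) := ⟨⟨0, by omega⟩⟩
  have hrk := rank_eq_of_closed_eq_univ (B.map (Int.cast : ℤ → ℚ))
    (fun i j hij => by simpa using hBoff i j hij) (fun i => (a (σ (c i)) : ℚ))
    (fun i => by exact_mod_cast ha _)
    (by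
      funext i
      have h1 : ∑ j, B i j * a (σ (c j)) = 0 := congrFun hBa i
      change ∑ j, (B i j : ℚ) * (a (σ (c j)) : ℚ) = 0
      exact_mod_cast h1)
    (fun T hT hTcl => by
      -- A closed set of the block is closed for `A`, so it is no smaller than `S`.
      have hle := hSmin (T.image fun i => σ (c i)) ⟨hT.image _, by
        intro i hi j hj
        obtain ⟨p, hp, rfl⟩ := Finset.mem_image.1 hi
        obtain ⟨q, rfl⟩ := σ.surjective j
        by_cases hq : (q : ℕ) < n - s
        · obtain ⟨l, rfl⟩ := hcsurj q hq
          have hl : l ∉ T := fun h => hj (Finset.mem_image_of_mem _ h)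
          simpa [hB] using hTcl p hp l hl
        · exact hzero _ _ (hclt p) (not_lt.1 hq)⟩
      rw [Finset.card_image_of_injective T (f := fun i => σ (c i)) (σ.injective.comp hcinj)] at hle
      refine Finset.eq_univ_of_card T (le_antisymm (Finset.card_le_univ T) ?_)
      rw [Fintype.card_fin]
      omega)
  rwa [Fintype.card_fin] at hrk
end

section
/- Let a_1, a_2, a_3, a_4 be positive integers with gcd(a_1,a_2,a_3,a_4) = 1 that minimally generate their numerical semigroup, and let A be a principal matrix of (a_1,a_2,a_3,a_4) with rank(A) = 2. Then there exist a permutation σ of {1,2,3,4} and positive integers d, e, c_1, c_2, c_3, c_4 with gcd(d,e) = gcd(c_1,c_2) = gcd(c_3,c_4) = 1 such that (a_{σ(1)}, a_{σ(2)}, a_{σ(3)}, a_{σ(4)}) = (d·c_2, d·c_1, e·c_4, e·c_3) and the matrix B with B_{ij} = A_{σ(i)σ(j)} equals [[−c_1, c_2, 0, 0], [c_1, −c_2, 0, 0], [0, 0, −c_3, c_4], [0, 0, c_3, −c_4]]. -/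
lemma mul_mem_closure_of_ne {a : Fin 4 → ℕ} {i j : Fin 4} (hij : i ≠ j) (x : ℕ) :
    x * a j ∈ AddSubmonoid.closure (a '' {k | k ≠ i}) := by
  rw [← smul_eq_mul]
  exact AddSubmonoid.nsmul_mem _ (AddSubmonoid.subset_closure (Set.mem_image_of_mem a hij.symm)) x

lemma IsPrincipalMatrix.row_sum {a : Fin 4 → ℕ} {A : Matrix (Fin 4) (Fin 4) ℤ}
    (hA : IsPrincipalMatrix A a) (i : Fin 4) : ∑ j, A i j * (a j : ℤ) = 0 :=
  congrFun hA.2.1 i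

/-- Maximum principle: a row of `A` indexed by a maximum point of a harmonic function is supported
on the maximum points. -/
lemma IsPrincipalMatrix.eq_zero_of_forall_le {a : Fin 4 → ℕ} (hapos : ∀ i, 0 < a i)
    {A : Matrix (Fin 4) (Fin 4) ℤ} (hA : IsPrincipalMatrix A a) {f : Fin 4 → ℚ}
    (hf : ∀ i, ∑ j, (A i j : ℚ) * (a j * f j) = 0) {i : Fin 4} (hi : ∀ j, f j ≤ f i)
    {j : Fin 4} (hj : f j ≠ f i) : A i j = 0 := by
  have h1 : ∑ j, (A i j : ℚ) * a j = 0 := by exact_mod_cast hA.row_sum i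
  have h2 : ∑ j, (A i j : ℚ) * a j * (f i - f j) = 0 := by
    have : ∑ j, (A i j : ℚ) * a j * (f i - f j)
        = (∑ j, (A i j : ℚ) * a j) * f i - ∑ j, (A i j : ℚ) * (a j * f j) := by
      rw [Finset.sum_mul, ← Finset.sum_sub_distrib]
      exact Finset.sum_congr rfl fun _ _ => by ring
    rw [this, h1, hf]; ring
  have h3 : ∀ k ∈ Finset.univ, 0 ≤ (A i k : ℚ) * a k * (f i - f k) := by
    intro k _
    by_cases hk : i = k
    · subst hk; simp
    · have : (0 : ℚ) ≤ A i k := by exact_mod_cast hA.1 i k hk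
      exact mul_nonneg (mul_nonneg this (Nat.cast_nonneg _)) (sub_nonneg.2 (hi k))
  have h4 := (Finset.sum_eq_zero_iff_of_nonneg h3).1 h2 j (Finset.mem_univ j)
  have h5 : (a j : ℚ) ≠ 0 := by exact_mod_cast (hapos j).ne'
  have h6 : f i - f j ≠ 0 := sub_ne_zero.2 hj.symm
  simpa [h5, h6] using h4

lemma IsPrincipalMatrix.exists_ne_zero {a : Fin 4 → ℕ} (hapos : ∀ i, 0 < a i)
    {A : Matrix (Fin 4) (Fin 4) ℤ} (hA : IsPrincipalMatrix A a) (i : Fin 4) :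
    ∃ j, i ≠ j ∧ A i j ≠ 0 := by
  by_contra! h
  have h1 := hA.row_sum i
  rw [Fintype.sum_eq_single i (fun j hj => by rw [h j hj.symm, zero_mul])] at h1
  obtain ⟨c, hc, hl⟩ := hA.2.2 i
  have hc0 : 0 < c := hl.1.1
  have := hapos i
  rw [hc] at h1
  rcases mul_eq_zero.1 h1 with h2 | h2 <;> omega

/-- The kernel of `A`, being two-dimensional, contains a vector not proportional to `a`; dividing it
entrywise by `a` gives a nonconstant harmonic function. -/
lemma exists_nonconstant_harmonic {a : Fin 4 → ℕ} (hapos : ∀ i, 0 < a i)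
    {A : Matrix (Fin 4) (Fin 4) ℤ} (hrank : (A.map (Int.cast : ℤ → ℚ)).rank = 2) :
    ∃ f : Fin 4 → ℚ, (∀ i, ∑ j, (A i j : ℚ) * (a j * f j) = 0) ∧ ∀ t, ∃ i, f i ≠ t := by
  by_contra! h
  have h1 := LinearMap.finrank_range_add_finrank_ker (A.map (Int.cast : ℤ → ℚ)).mulVecLin
  have h2 : LinearMap.ker (A.map (Int.cast : ℤ → ℚ)).mulVecLin
      ≤ Submodule.span ℚ {fun i => (a i : ℚ)} := by
    intro w hw
    have ha : ∀ j, (a j : ℚ) ≠ 0 := fun j => by exact_mod_cast (hapos j).ne'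
    obtain ⟨t, ht⟩ := h (fun j => w j / a j) (fun i => by
      have : ∀ j, (a j : ℚ) * (w j / a j) = w j := fun j => mul_div_cancel₀ _ (ha j)
      simp only [this]
      exact congrFun hw i)
    refine Submodule.mem_span_singleton.2 ⟨t, funext fun i => ?_⟩
    have := ht i
    simp only [Pi.smul_apply, smul_eq_mul]
    rw [← this, div_mul_cancel₀ _ (ha i)]
  have h3 := (Submodule.finrank_mono h2).trans (finrank_span_le_card _)
  rw [Matrix.rank] at hrank
  rw [hrank] at h1
  simp at h1 h3
  omega

/-- If rows `i` and `j` of `A` are supported on the columns `i` and `j`, they have the shape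
`(-c₁, c₂)`, `(c₁, -c₂)` there. -/
lemma IsPrincipalMatrix.exists_block {a : Fin 4 → ℕ} (hapos : ∀ i, 0 < a i)
    {A : Matrix (Fin 4) (Fin 4) ℤ} (hA : IsPrincipalMatrix A a) {i j : Fin 4} (hij : i ≠ j)
    (hi : ∀ k, k ≠ i ∧ k ≠ j → A i k = 0) (hj : ∀ k, k ≠ i ∧ k ≠ j → A j k = 0) :
    ∃ d c₁ c₂ : ℕ, 0 < d ∧ 0 < c₁ ∧ 0 < c₂ ∧ Nat.gcd c₁ c₂ = 1 ∧ a i = d * c₂ ∧ a j = d * c₁ ∧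
      A i i = -(c₁ : ℤ) ∧ A i j = c₂ ∧ A j i = c₁ ∧ A j j = -(c₂ : ℤ) := by
  obtain ⟨c₁, h1, ⟨h1pos, -⟩, h1min⟩ := hA.2.2 i
  obtain ⟨c₂, h2, ⟨h2pos, -⟩, h2min⟩ := hA.2.2 j
  obtain ⟨x, hx⟩ := Int.eq_ofNat_of_zero_le (hA.1 i j hij)
  obtain ⟨y, hy⟩ := Int.eq_ofNat_of_zero_le (hA.1 j i hij.symm)
  have e1 := hA.row_sum i
  rw [Fintype.sum_eq_add i j hij (fun k hk => by rw [hi k hk, zero_mul]), h1, hx] at e1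
  have e2 := hA.row_sum j
  rw [Fintype.sum_eq_add i j hij (fun k hk => by rw [hj k hk, zero_mul]), h2, hy] at e2
  have e1' : c₁ * a i = x * a j := by zify; linarith
  have e2' : c₂ * a j = y * a i := by zify; linarith
  have hai := hapos i
  have haj := hapos j
  have hx0 : 0 < x := Nat.pos_of_mul_pos_right (e1' ▸ Nat.mul_pos h1pos hai)
  have hy0 : 0 < y := Nat.pos_of_mul_pos_right (e2' ▸ Nat.mul_pos h2pos haj)
  have l1 : c₁ ≤ y := h1min ⟨hy0, e2' ▸ mul_mem_closure_of_ne hij c₂⟩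
  have l2 : c₂ ≤ x := h2min ⟨hx0, e1' ▸ mul_mem_closure_of_ne hij.symm c₁⟩
  have ex : x = c₂ := by
    have : x * a j ≤ c₂ * a j := by rw [← e1', e2']; exact Nat.mul_le_mul_right _ l1
    exact le_antisymm (Nat.le_of_mul_le_mul_right this haj) l2
  subst ex
  have ey : y = c₁ := Nat.eq_of_mul_eq_mul_right hai (by rw [← e2', e1'])
  subst ey
  -- A common factor `g` could be cancelled from `c₁ a_i = c₂ a_j`, so minimality forces `g = 1`.
  have hg : Nat.gcd y x = 1 := by
    obtain ⟨u, hu⟩ := Nat.gcd_dvd_left y x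
    obtain ⟨v, hv⟩ := Nat.gcd_dvd_right y x
    set g := Nat.gcd y x
    have hg0 : 0 < g := Nat.gcd_pos_of_pos_left _ h1pos
    have hu0 : 0 < u := Nat.pos_of_ne_zero (by rintro rfl; omega)
    have e : u * a i = v * a j := by
      apply Nat.eq_of_mul_eq_mul_left hg0
      rw [← mul_assoc, ← mul_assoc, ← hu, ← hv, e1']
    have : y ≤ u := h1min ⟨hu0, e ▸ mul_mem_closure_of_ne hij v⟩
    have h' : g * u ≤ 1 * u := by omega
    have := Nat.le_of_mul_le_mul_right h' hu0
    omega
  have hdvd : x ∣ a i :=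
    (Nat.Coprime.symm hg).dvd_of_dvd_mul_left (Dvd.intro _ e1'.symm)
  obtain ⟨d, hd⟩ := hdvd
  refine ⟨d, y, x, Nat.pos_of_ne_zero (by rintro rfl; omega), h1pos, h2pos, hg,
    by rw [hd, mul_comm], ?_, h1, hx, hy, h2⟩
  apply Nat.eq_of_mul_eq_mul_left hx0
  rw [← e1', hd]; ring

/-- if `a = (a₁,a₂,a₃,a₄)` are relatively prime positive integers minimally
generating their numerical semigroup and `A` is a principal matrix of `a` of rank `2`,
then after a permutation `σ`, `a` splits as `d{c₁,c₂} ⊔ e{c₃,c₄}` and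
`(A_{σ(i)σ(j)})` is the concatenation of two `2 × 2` blocks. -/
theorem rank_two_principal_matrix_dim_four (a : Fin 4 → ℕ) (hapos : ∀ i, 0 < a i)
    (hgcd : Finset.univ.gcd a = 1)
    (hmin : ∀ i, a i ∉ AddSubmonoid.closure (a '' {j | j ≠ i}))
    (A : Matrix (Fin 4) (Fin 4) ℤ) (hA : IsPrincipalMatrix A a)
    (hrank : (A.map (Int.cast : ℤ → ℚ)).rank = 2) :
    ∃ (σ : Equiv.Perm (Fin 4)) (d e c₁ c₂ c₃ c₄ : ℕ),
      0 < d ∧ 0 < e ∧ 0 < c₁ ∧ 0 < c₂ ∧ 0 < c₃ ∧ 0 < c₄ ∧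
      Nat.gcd d e = 1 ∧ Nat.gcd c₁ c₂ = 1 ∧ Nat.gcd c₃ c₄ = 1 ∧
      a (σ 0) = d * c₂ ∧ a (σ 1) = d * c₁ ∧ a (σ 2) = e * c₄ ∧ a (σ 3) = e * c₃ ∧
      (Matrix.of fun i j : Fin 4 => A (σ i) (σ j)) =
        !![-(c₁ : ℤ), (c₂ : ℤ), 0, 0;
           (c₁ : ℤ), -(c₂ : ℤ), 0, 0;
           0, 0, -(c₃ : ℤ), (c₄ : ℤ);
           0, 0, (c₃ : ℤ), -(c₄ : ℤ)] := by
  obtain ⟨f, hf, hnc⟩ := exists_nonconstant_harmonic hapos hrank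
  have hf' : ∀ i, ∑ j, (A i j : ℚ) * (a j * (-f) j) = 0 := by
    intro i
    have := hf i
    simpa only [Pi.neg_apply, mul_neg, Finset.sum_neg_distrib, neg_eq_zero] using this
  obtain ⟨p, hp⟩ := Finite.exists_max f
  obtain ⟨r, hr⟩ := Finite.exists_min f
  have hlt : f r < f p := by
    obtain ⟨i, hi⟩ := hnc (f p)
    exact (hr i).trans_lt (lt_of_le_of_ne (hp i) hi)
  have max_row : ∀ i, f i = f p → ∀ j, f j ≠ f p → A i j = 0 := fun i hi j hj =>
    hA.eq_zero_of_forall_le hapos hf (fun k => hi ▸ hp k) (hi ▸ hj)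
  have min_row : ∀ i, f i = f r → ∀ j, f j ≠ f r → A i j = 0 := fun i hi j hj =>
    hA.eq_zero_of_forall_le hapos hf' (fun k => neg_le_neg (hi ▸ hr k))
      (fun h => hj (hi ▸ neg_injective h))
  obtain ⟨q, hpq, hq⟩ := hA.exists_ne_zero hapos p
  obtain ⟨s, hrs, hs⟩ := hA.exists_ne_zero hapos r
  have fq : f q = f p := by_contra fun h => hq (max_row p rfl q h)
  have fs : f s = f r := by_contra fun h => hs (min_row r rfl s h)
  have hpr : p ≠ r := by rintro rfl; exact hlt.ne rfl
  have hps : p ≠ s := by rintro rfl; exact hlt.ne fs.symm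
  have hqr : q ≠ r := by rintro rfl; exact hlt.ne fq
  have hqs : q ≠ s := by rintro rfl; exact hlt.ne (fs.symm.trans fq)
  have hall : ∀ k, k = p ∨ k = q ∨ k = r ∨ k = s := by
    clear * - hpq hrs hpr hps hqr hqs
    omega
  have z1 : ∀ i, f i = f p → ∀ k, k = r ∨ k = s → A i k = 0 := by
    rintro i hi k (rfl | rfl)
    · exact max_row i hi _ hlt.ne
    · exact max_row i hi _ (fs ▸ hlt.ne)
  have z2 : ∀ i, f i = f r → ∀ k, k = p ∨ k = q → A i k = 0 := by
    rintro i hi k (rfl | rfl)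
    · exact min_row i hi _ hlt.ne'
    · exact min_row i hi _ (fq ▸ hlt.ne')
  have w1 : ∀ i, f i = f p → ∀ k, k ≠ p ∧ k ≠ q → A i k = 0 := fun i hi k hk =>
    z1 i hi k (by have := hall k; tauto)
  have w2 : ∀ i, f i = f r → ∀ k, k ≠ r ∧ k ≠ s → A i k = 0 := fun i hi k hk =>
    z2 i hi k (by have := hall k; tauto)
  obtain ⟨d, c₁, c₂, hd, h1, h2, g12, ap, aq, b1, b2, b3, b4⟩ :=
    hA.exists_block hapos hpq (w1 p rfl) (w1 q fq)
  obtain ⟨e, c₃, c₄, he, h3, h4, g34, ar, as, b5, b6, b7, b8⟩ :=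
    hA.exists_block hapos hrs (w2 r rfl) (w2 s fs)
  have hinj : Function.Injective ![p, q, r, s] := by
    intro i j
    fin_cases i <;> fin_cases j <;> simp [hpq, hrs, hpr, hps, hqr, hqs, hpq.symm, hrs.symm,
      hpr.symm, hps.symm, hqr.symm, hqs.symm]
  refine ⟨Equiv.ofBijective _ (Finite.injective_iff_bijective.1 hinj), d, e, c₁, c₂, c₃, c₄,
    hd, he, h1, h2, h3, h4, ?_, g12, g34, ap, aq, ar, as, ?_⟩
  · have : Nat.gcd d e ∣ Finset.univ.gcd a := by
      refine Finset.dvd_gcd fun k _ => ?_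
      have hgd := Nat.gcd_dvd_left d e
      have hge := Nat.gcd_dvd_right d e
      rcases hall k with rfl | rfl | rfl | rfl
      · exact ap ▸ hgd.mul_right _
      · exact aq ▸ hgd.mul_right _
      · exact ar ▸ hge.mul_right _
      · exact as ▸ hge.mul_right _
    rw [hgcd] at this
    exact Nat.dvd_one.1 this
  · have y1 := z1 p rfl r (.inl rfl)
    have y2 := z1 p rfl s (.inr rfl)
    have y3 := z1 q fq r (.inl rfl)
    have y4 := z1 q fq s (.inr rfl)
    have y5 := z2 r rfl p (.inl rfl)
    have y6 := z2 r rfl q (.inr rfl)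
    have y7 := z2 s fs p (.inl rfl)
    have y8 := z2 s fs q (.inr rfl)
    ext i j
    fin_cases i <;> fin_cases j <;> simp [*]
end

section
/- Let a_1,…,a_5 be positive integers with gcd(a_1,…,a_5) = 1 that minimally generate their numerical semigroup, and let A be a principal matrix of (a_1,…,a_5) with rank(A) = 3. Then there exists a permutation σ of {1,…,5} such that, writing B_{ij} = A_{σ(i)σ(j)} and b_i = a_{σ(i)}, one of the following holds: (1) B_{ij} = 0 whenever (i ∈ {1,2,3} and j ∈ {4,5}) or (i ∈ {4,5} and j ∈ {1,2,3}), and there exist positive integers d, e, c_1, c_2, c_3, c_4, c_5 with gcd(d,e) = 1, gcd(c_1,c_2,c_3) = 1, gcd(c_4,c_5) = 1 and (b_1, b_2, b_3, b_4, b_5) = (d·c_1, d·c_2, d·c_3, e·c_4, e·c_5); or (2) B_{ij} = 0 whenever (i ∈ {2,3} and j ∉ {2,3}) or (i ∈ {4,5} and j ∉ {4,5}), the 2×2 block of B on rows and columns {2,3} equals [[−c_2, c_3],[c_2, −c_3]] for some positive integers c_2, c_3 with gcd(c_2,c_3) = 1, and there exist positive integers d, e, c_4, c_5 with gcd(c_4,c_5)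 = 1, gcd(b_1, d, e) = 1 and (b_2, b_3, b_4, b_5) = (d·c_3, d·c_2, e·c_5, e·c_4). -/
/-! ### Closed sets of indices -/

/-- Maximum principle: if `v` is in the kernel and `v ≤ M • a`, then the set where equality holds
is closed. -/
lemma closed_of_le {a : Fin 5 → ℕ} {A : Matrix (Fin 5) (Fin 5) ℤ} (hA : IsPrincipalMatrix A a)
    {v : Fin 5 → ℚ} (hv : (A.map (Int.cast : ℤ → ℚ)).mulVec v = 0) {M : ℚ}
    (hM : ∀ i, v i ≤ M * a i) {i j : Fin 5} (hi : v i = M * a i) (hj : v j ≠ M * a j) :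
    A i j = 0 := by
  have h1 : ∑ k, (A i k : ℚ) * v k = 0 := by
    simpa [Matrix.mulVec, dotProduct] using congrFun hv i
  have h2 : ∑ k, (A i k : ℚ) * (a k : ℚ) = 0 := by
    have h := congrFun hA.2.1 i
    simp only [Matrix.mulVec, dotProduct, Pi.zero_apply] at h
    exact_mod_cast h
  have h3 : ∑ k, (A i k : ℚ) * (M * a k - v k) = 0 := by
    have : ∀ k, (A i k : ℚ) * (M * a k - v k) = M * (A i k * a k) - A i k * v k := by
      intro k; ring
    simp only [this, Finset.sum_sub_distrib, ← Finset.mul_sum, h1, h2]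
    ring
  have h4 : ∀ k ∈ Finset.univ, 0 ≤ (A i k : ℚ) * (M * a k - v k) := by
    intro k _
    by_cases hk : i = k
    · subst hk; simp [hi]
    · exact mul_nonneg (by exact_mod_cast hA.1 i k hk) (sub_nonneg.2 (hM k))
  have h5 := (Finset.sum_eq_zero_iff_of_nonneg h4).1 h3 j (Finset.mem_univ _)
  rcases mul_eq_zero.1 h5 with h | h
  · exact_mod_cast h
  · exact absurd (sub_eq_zero.1 h).symm hj

lemma exists_ne_of_closed {a : Fin 5 → ℕ} (hapos : ∀ i, 0 < a i) {A : Matrix (Fin 5) (Fin 5) ℤ}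
    (hA : IsPrincipalMatrix A a) {S : Set (Fin 5)} (hS : ∀ i ∈ S, ∀ j ∉ S, A i j = 0)
    {i : Fin 5} (hi : i ∈ S) : ∃ j ∈ S, i ≠ j := by
  by_contra! h
  have h2 := congrFun hA.2.1 i
  simp only [Matrix.mulVec, dotProduct, Pi.zero_apply] at h2
  rw [Finset.sum_eq_single i] at h2
  · obtain ⟨c, hc, hl⟩ := hA.2.2 i
    have := hl.1.1
    have := hapos i
    rcases mul_eq_zero.1 h2 with h | h <;> omega
  · intro j _ hj
    rw [hS i hi j (fun hjS => hj (h j hjS).symm), zero_mul]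
  · simp

/-! ### Closed blocks of size two -/

/-- The shape of a closed `2 × 2` block. The two rows read `c₂ * a p = A p q * a q` and
`c₃ * a q = A q p * a p`, so minimality gives `c₃ ≤ A p q` and `c₂ ≤ A q p`; comparing the
products forces equality. A common factor of `c₂` and `c₃` would contradict minimality. -/
lemma two_block {a : Fin 5 → ℕ} (hapos : ∀ i, 0 < a i) {A : Matrix (Fin 5) (Fin 5) ℤ}
    (hA : IsPrincipalMatrix A a) {p q : Fin 5} (hpq : p ≠ q)
    (hp : ∀ j, j ≠ p → j ≠ q → A p j = 0) (hq : ∀ j, j ≠ p → j ≠ q → A q j = 0) :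
    ∃ c₂ c₃ d : ℕ, 0 < c₂ ∧ 0 < c₃ ∧ 0 < d ∧ Nat.gcd c₂ c₃ = 1 ∧
      A p p = -(c₂ : ℤ) ∧ A p q = (c₃ : ℤ) ∧ A q p = (c₂ : ℤ) ∧ A q q = -(c₃ : ℤ) ∧
      a p = d * c₃ ∧ a q = d * c₂ := by
  obtain ⟨c₂, hc2, ⟨h2pos, -⟩, h2min⟩ := hA.2.2 p
  obtain ⟨c₃, hc3, ⟨h3pos, -⟩, h3min⟩ := hA.2.2 q
  have row : ∀ i, (∀ j, j ≠ p → j ≠ q → A i j = 0) → A i p * a p + A i q * a q = 0 := by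
    intro i h
    have h2 := congrFun hA.2.1 i
    simp only [Matrix.mulVec, dotProduct, Pi.zero_apply] at h2
    rw [← Finset.sum_subset (Finset.subset_univ {p, q}), Finset.sum_pair hpq] at h2
    · exact h2
    · intro j _ hj
      simp only [Finset.mem_insert, Finset.mem_singleton, not_or] at hj
      rw [h j hj.1 hj.2, zero_mul]
  have rp := row p hp
  have rq := row q hq
  obtain ⟨x, hx⟩ := Int.eq_ofNat_of_zero_le (hA.1 p q hpq)
  obtain ⟨y, hy⟩ := Int.eq_ofNat_of_zero_le (hA.1 q p hpq.symm)
  rw [hc2, hx] at rp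
  rw [hc3, hy] at rq
  have ep : c₂ * a p = x * a q := by zify; linarith
  have eq' : c₃ * a q = y * a p := by zify; linarith
  have app := hapos p
  have apq := hapos q
  have minp : ∀ m n : ℕ, 0 < m → m * a p = n * a q → c₂ ≤ m := by
    intro m n hm h
    refine h2min ⟨hm, ?_⟩
    rw [h, ← smul_eq_mul]
    exact AddSubmonoid.nsmul_mem _ (AddSubmonoid.subset_closure (Set.mem_image_of_mem a (Ne.symm hpq))) _
  have minq : ∀ m n : ℕ, 0 < m → m * a q = n * a p → c₃ ≤ m := by
    intro m n hm h
    refine h3min ⟨hm, ?_⟩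
    rw [h, ← smul_eq_mul]
    exact AddSubmonoid.nsmul_mem _ (AddSubmonoid.subset_closure (Set.mem_image_of_mem a hpq)) _
  have xpos : 0 < x := Nat.pos_of_mul_pos_right (ep ▸ Nat.mul_pos h2pos app)
  have ypos : 0 < y := Nat.pos_of_mul_pos_right (eq' ▸ Nat.mul_pos h3pos apq)
  have hle1 : c₃ ≤ x := minq x c₂ xpos ep.symm
  have hle2 : c₂ ≤ y := minp y c₃ ypos eq'.symm
  have hxe : x = c₃ := by
    refine le_antisymm ?_ hle1
    have : x * a q ≤ c₃ * a q := by
      rw [← ep, eq']; exact Nat.mul_le_mul_right _ hle2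
    exact Nat.le_of_mul_le_mul_right this apq
  have hye : y = c₂ := by
    subst hxe
    exact Nat.eq_of_mul_eq_mul_right app (by rw [← eq', ep])
  subst hxe hye
  have hcop : Nat.gcd y x = 1 := by
    have hg : 0 < Nat.gcd y x := Nat.gcd_pos_of_pos_left _ h2pos
    obtain ⟨y', hy'⟩ := Nat.gcd_dvd_left y x
    obtain ⟨x', hx'⟩ := Nat.gcd_dvd_right y x
    set g := Nat.gcd y x
    have y'pos : 0 < y' := Nat.pos_of_ne_zero (by rintro rfl; omega)
    have := minp y' x' y'pos (by
      apply Nat.eq_of_mul_eq_mul_left hg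
      rw [← mul_assoc, ← mul_assoc, ← hy', ← hx', ep])
    nlinarith
  obtain ⟨d, hd⟩ : x ∣ a p :=
    (Nat.Coprime.symm hcop).dvd_of_dvd_mul_left (ep ▸ Dvd.intro _ rfl)
  refine ⟨y, x, d, h2pos, h3pos, ?_, hcop, hc2, hx, hy, hc3, by rw [hd, mul_comm], ?_⟩
  · exact Nat.pos_of_ne_zero (by rintro rfl; omega)
  · apply Nat.eq_of_mul_eq_mul_left xpos
    rw [← ep, hd]; ring

/-! ### Extracting greatest common divisors -/

lemma exists_gcd_two {x y : ℕ} (hx : 0 < x) (hy : 0 < y) : ∃ d u v : ℕ,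
    0 < d ∧ 0 < u ∧ 0 < v ∧ Nat.gcd u v = 1 ∧ x = d * u ∧ y = d * v := by
  obtain ⟨g, u, v, hg, hc, rfl, rfl⟩ := Nat.exists_coprime' (Nat.gcd_pos_of_pos_left y hx)
  exact ⟨g, u, v, hg, Nat.pos_of_mul_pos_right hx, Nat.pos_of_mul_pos_right hy, hc,
    mul_comm _ _, mul_comm _ _⟩

lemma exists_gcd_three {x y z : ℕ} (hx : 0 < x) (hy : 0 < y) (hz : 0 < z) :
    ∃ d u v w : ℕ, 0 < d ∧ 0 < u ∧ 0 < v ∧ 0 < w ∧ Nat.gcd (Nat.gcd u v) w = 1 ∧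
      x = d * u ∧ y = d * v ∧ z = d * w := by
  obtain ⟨g, u, v, hg, hu, hv, hc, rfl, rfl⟩ := exists_gcd_two hx hy
  obtain ⟨d, g', w, hd, hg', hw, hc', rfl, rfl⟩ := exists_gcd_two hg hz
  refine ⟨d, g' * u, g' * v, w, hd, by positivity, by positivity, hw, ?_, ?_, ?_, rfl⟩
  · rw [Nat.gcd_mul_left, hc, mul_one, hc']
  · ring
  · ring

/-! ### The kernel and two disjoint closed sets -/

/-- Rank `3` leaves room in the kernel for a vector outside the line spanned by `a`. -/
lemma exists_kernel_vector (a : Fin 5 → ℕ) (A : Matrix (Fin 5) (Fin 5) ℤ)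
    (hrank : (A.map (Int.cast : ℤ → ℚ)).rank = 3) :
    ∃ v : Fin 5 → ℚ, (A.map (Int.cast : ℤ → ℚ)).mulVec v = 0 ∧
      ∀ M : ℚ, ∃ i, v i ≠ M * a i := by
  by_contra! h
  have hle : LinearMap.ker (A.map (Int.cast : ℤ → ℚ)).mulVecLin ≤
      Submodule.span ℚ {fun i => (a i : ℚ)} := by
    intro v hv
    obtain ⟨M, hM⟩ := h v (by simpa using hv)
    exact Submodule.mem_span_singleton.2 ⟨M, by ext i; simp [hM i]⟩
  have h1 := Submodule.finrank_mono hle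
  have h2 := finrank_span_le_card (R := ℚ) ({fun i => (a i : ℚ)} : Set (Fin 5 → ℚ))
  simp only [Set.toFinset_singleton, Finset.card_singleton] at h2
  have h3 := LinearMap.finrank_range_add_finrank_ker (A.map (Int.cast : ℤ → ℚ)).mulVecLin
  rw [Matrix.rank] at hrank
  simp only [Module.finrank_fintype_fun_eq_card, Fintype.card_fin] at h3
  omega

/-- Two disjoint nonempty closed sets: the maximum and minimum loci of `v i / a i`. -/
lemma exists_closed_pair {a : Fin 5 → ℕ} (hapos : ∀ i, 0 < a i)
    {A : Matrix (Fin 5) (Fin 5) ℤ} (hA : IsPrincipalMatrix A a)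
    (hrank : (A.map (Int.cast : ℤ → ℚ)).rank = 3) :
    ∃ S T : Set (Fin 5), S.Nonempty ∧ T.Nonempty ∧ Disjoint S T ∧
      (∀ i ∈ S, ∀ j ∉ S, A i j = 0) ∧ (∀ i ∈ T, ∀ j ∉ T, A i j = 0) := by
  obtain ⟨v, hv, hne⟩ := exists_kernel_vector a A hrank
  have hpos : ∀ i, (0 : ℚ) < a i := fun i => by exact_mod_cast hapos i
  obtain ⟨p, -, hp⟩ := Finset.exists_max_image Finset.univ (fun i => v i / a i) ⟨0, by simp⟩
  obtain ⟨q, -, hq⟩ := Finset.exists_min_image Finset.univ (fun i => v i / a i) ⟨0, by simp⟩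
  set M := v p / a p with hMdef
  set m := v q / a q with hmdef
  have hM : ∀ i, v i ≤ M * a i := fun i => (div_le_iff₀ (hpos i)).1 (hp i (by simp))
  have hm : ∀ i, m * a i ≤ v i := fun i => (le_div_iff₀ (hpos i)).1 (hq i (by simp))
  refine ⟨{i | v i = M * a i}, {i | v i = m * a i}, ⟨p, ?_⟩, ⟨q, ?_⟩, ?_, ?_, ?_⟩
  · exact (div_mul_cancel₀ _ (hpos p).ne').symm
  · exact (div_mul_cancel₀ _ (hpos q).ne').symm
  · rw [Set.disjoint_left]
    intro i hi hi'
    have hMm : M = m := mul_right_cancel₀ (hpos i).ne' (hi.symm.trans hi')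
    obtain ⟨k, hk⟩ := hne M
    exact hk (le_antisymm (hM k) (hMm ▸ hm k))
  · intro i hi j hj
    exact closed_of_le hA hv hM hi hj
  · intro i hi j hj
    have hv' : (A.map (Int.cast : ℤ → ℚ)).mulVec (-v) = 0 := by rw [Matrix.mulVec_neg, hv, neg_zero]
    refine closed_of_le hA hv' (M := -m) (i := i) (fun k => ?_) ?_ ?_
    · have := hm k
      simp only [Pi.neg_apply]; linarith
    · have : v i = m * a i := hi
      simp only [Pi.neg_apply]; linarith
    · intro h
      apply hj
      simp only [Pi.neg_apply] at h
      show v j = m * a j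
      linarith

/-! ### The block structures -/

lemma exists_perm {x p q r s : Fin 5} (h : [x, p, q, r, s].Nodup) :
    ∃ σ : Equiv.Perm (Fin 5), σ 0 = x ∧ σ 1 = p ∧ σ 2 = q ∧ σ 3 = r ∧ σ 4 = s :=
  ⟨Equiv.ofBijective [x, p, q, r, s].get
    (Finite.injective_iff_bijective.1 (List.nodup_iff_injective_get.1 h)), rfl, rfl, rfl, rfl, rfl⟩

/-- Two closed sets that partition the indices as `3 + 2` give the first alternative, with `d` and `e`
the greatest common divisors of the two parts of `a`. -/
lemma case_one {a : Fin 5 → ℕ} (hapos : ∀ i, 0 < a i) (hgcd : Finset.univ.gcd a = 1)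
    {A : Matrix (Fin 5) (Fin 5) ℤ} {S T : Set (Fin 5)} (hST : Disjoint S T)
    (hS : ∀ i ∈ S, ∀ j ∉ S, A i j = 0) (hT : ∀ i ∈ T, ∀ j ∉ T, A i j = 0)
    (σ : Equiv.Perm (Fin 5)) (h0 : σ 0 ∈ S) (h1 : σ 1 ∈ S) (h2 : σ 2 ∈ S)
    (h3 : σ 3 ∈ T) (h4 : σ 4 ∈ T) :
    (∀ i j : Fin 5,
        (((i : ℕ) < 3 ∧ 3 ≤ (j : ℕ)) ∨ (3 ≤ (i : ℕ) ∧ (j : ℕ) < 3)) →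
        A (σ i) (σ j) = 0) ∧
      ∃ d e c₁ c₂ c₃ c₄ c₅ : ℕ,
        0 < d ∧ 0 < e ∧ 0 < c₁ ∧ 0 < c₂ ∧ 0 < c₃ ∧ 0 < c₄ ∧ 0 < c₅ ∧
        Nat.gcd d e = 1 ∧ Nat.gcd (Nat.gcd c₁ c₂) c₃ = 1 ∧ Nat.gcd c₄ c₅ = 1 ∧
        a (σ 0) = d * c₁ ∧ a (σ 1) = d * c₂ ∧ a (σ 2) = d * c₃ ∧
        a (σ 3) = e * c₄ ∧ a (σ 4) = e * c₅ := by
  have hlt : ∀ i : Fin 5, (i : ℕ) < 3 → σ i ∈ S := by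
    intro i hi; fin_cases i <;> first | assumption | (simp at hi)
  have hge : ∀ i : Fin 5, 3 ≤ (i : ℕ) → σ i ∈ T := by
    intro i hi; fin_cases i <;> first | assumption | (simp at hi)
  refine ⟨?_, ?_⟩
  · rintro i j (⟨hi, hj⟩ | ⟨hi, hj⟩)
    · exact hS _ (hlt i hi) _ (Set.disjoint_right.1 hST (hge j hj))
    · exact hT _ (hge i hi) _ (Set.disjoint_left.1 hST (hlt j hj))
  · obtain ⟨d, c₁, c₂, c₃, hd, hc1, hc2, hc3, hc, e0, e1, e2⟩ :=
      exists_gcd_three (hapos (σ 0)) (hapos (σ 1)) (hapos (σ 2))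
    obtain ⟨e, c₄, c₅, he, hc4, hc5, hc', e3, e4⟩ :=
      exists_gcd_two (hapos (σ 3)) (hapos (σ 4))
    refine ⟨d, e, c₁, c₂, c₃, c₄, c₅, hd, he, hc1, hc2, hc3, hc4, hc5, ?_, hc, hc',
      e0, e1, e2, e3, e4⟩
    have hdv := Nat.gcd_dvd_left d e
    have hev := Nat.gcd_dvd_right d e
    refine Nat.dvd_one.1 (hgcd ▸ Finset.dvd_gcd fun i _ => ?_)
    obtain ⟨k, rfl⟩ := σ.surjective i
    fin_cases k
    · exact e0 ▸ hdv.mul_right _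
    · exact e1 ▸ hdv.mul_right _
    · exact e2 ▸ hdv.mul_right _
    · exact e3 ▸ hev.mul_right _
    · exact e4 ▸ hev.mul_right _

/-- if `a = (a₁,…,a₅)` are relatively prime positive integers minimally
generating their numerical semigroup and `A` is a principal matrix of `a` of rank `3`,
then after a permutation `σ` the matrix `B = (A_{σ(i)σ(j)})` and vector `b = (a_{σ(i)})`
have either a `3 + 2` block structure with `b = d{c₁,c₂,c₃} ⊔ e{c₄,c₅}`, or a
`1 + 2 + 2` block structure with `b = b₁ ⊔ d{c₂,c₃} ⊔ e{c₄,c₅}`. -/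
theorem rank_three_principal_matrix_dim_five (a : Fin 5 → ℕ) (hapos : ∀ i, 0 < a i)
    (hgcd : Finset.univ.gcd a = 1)
    (hmin : ∀ i, a i ∉ AddSubmonoid.closure (a '' {j | j ≠ i}))
    (A : Matrix (Fin 5) (Fin 5) ℤ) (hA : IsPrincipalMatrix A a)
    (hrank : (A.map (Int.cast : ℤ → ℚ)).rank = 3) :
    ∃ σ : Equiv.Perm (Fin 5),
      -- Case (1): `3 + 2` block structure
      ((∀ i j : Fin 5,
          (((i : ℕ) < 3 ∧ 3 ≤ (j : ℕ)) ∨ (3 ≤ (i : ℕ) ∧ (j : ℕ) < 3)) →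
          A (σ i) (σ j) = 0) ∧
        ∃ d e c₁ c₂ c₃ c₄ c₅ : ℕ,
          0 < d ∧ 0 < e ∧ 0 < c₁ ∧ 0 < c₂ ∧ 0 < c₃ ∧ 0 < c₄ ∧ 0 < c₅ ∧
          Nat.gcd d e = 1 ∧ Nat.gcd (Nat.gcd c₁ c₂) c₃ = 1 ∧ Nat.gcd c₄ c₅ = 1 ∧
          a (σ 0) = d * c₁ ∧ a (σ 1) = d * c₂ ∧ a (σ 2) = d * c₃ ∧
          a (σ 3) = e * c₄ ∧ a (σ 4) = e * c₅) ∨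
      -- Case (2): `1 + 2 + 2` block structure
      ((∀ i j : Fin 5, (i = 1 ∨ i = 2) → ¬(j = 1 ∨ j = 2) → A (σ i) (σ j) = 0) ∧
        (∀ i j : Fin 5, (i = 3 ∨ i = 4) → ¬(j = 3 ∨ j = 4) → A (σ i) (σ j) = 0) ∧
        ∃ c₂ c₃ : ℕ, 0 < c₂ ∧ 0 < c₃ ∧ Nat.gcd c₂ c₃ = 1 ∧
          A (σ 1) (σ 1) = -(c₂ : ℤ) ∧ A (σ 1) (σ 2) = (c₃ : ℤ) ∧
          A (σ 2) (σ 1) = (c₂ : ℤ) ∧ A (σ 2) (σ 2) = -(c₃ : ℤ) ∧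
          ∃ d e c₄ c₅ : ℕ,
            0 < d ∧ 0 < e ∧ 0 < c₄ ∧ 0 < c₅ ∧
            Nat.gcd c₄ c₅ = 1 ∧ Nat.gcd (a (σ 0)) (Nat.gcd d e) = 1 ∧
            a (σ 1) = d * c₃ ∧ a (σ 2) = d * c₂ ∧
            a (σ 3) = e * c₅ ∧ a (σ 4) = e * c₄) := by
  obtain ⟨S, T, ⟨p, hp⟩, ⟨r, hr⟩, hST, hS, hT⟩ := exists_closed_pair hapos hA hrank
  obtain ⟨q, hq, hpq⟩ := exists_ne_of_closed hapos hA hS hp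
  obtain ⟨s, hs, hrs⟩ := exists_ne_of_closed hapos hA hT hr
  have hd : ∀ i ∈ S, ∀ j ∈ T, i ≠ j := fun i hi j hj h =>
    Set.disjoint_left.1 hST hi (h ▸ hj)
  have hpr := hd p hp r hr
  have hps := hd p hp s hs
  have hqr := hd q hq r hr
  have hqs := hd q hq s hs
  obtain ⟨x, hxp, hxq, hxr, hxs, hx⟩ : ∃ x : Fin 5, x ≠ p ∧ x ≠ q ∧ x ≠ r ∧ x ≠ s ∧
      ∀ j : Fin 5, j ≠ x → j ≠ p → j ≠ q → j ≠ r → j = s := by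
    have hcard : ({p, q, r, s} : Finset (Fin 5)).card = 4 := by simp [*]
    have hcompl : ({p, q, r, s} : Finset (Fin 5))ᶜ.card = 1 := by
      rw [Finset.card_compl, hcard, Fintype.card_fin]
    obtain ⟨x, hx⟩ := Finset.card_eq_one.1 hcompl
    have key : ∀ j, ¬ (j = p ∨ j = q ∨ j = r ∨ j = s) ↔ j = x := by
      intro j
      have := Finset.ext_iff.1 hx j
      simpa only [Finset.mem_compl, Finset.mem_insert, Finset.mem_singleton] using this
    have hxx := (key x).2 rfl
    refine ⟨x, ?_, ?_, ?_, ?_, fun j h1 h2 h3 h4 => ?_⟩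
    · tauto
    · tauto
    · tauto
    · tauto
    · have := key j
      tauto
  by_cases hxS : x ∈ S
  · obtain ⟨σ, s0, s1, s2, s3, s4⟩ := exists_perm (x := x) (p := p) (q := q) (r := r) (s := s)
      (by simp [*])
    exact ⟨σ, Or.inl (case_one hapos hgcd hST hS hT σ (s0 ▸ hxS) (s1 ▸ hp) (s2 ▸ hq)
      (s3 ▸ hr) (s4 ▸ hs))⟩
  by_cases hxT : x ∈ T
  · obtain ⟨σ, s0, s1, s2, s3, s4⟩ := exists_perm (x := x) (p := r) (q := s) (r := p) (s := q)
      (by simp [*, hpr.symm, hps.symm, hqr.symm, hqs.symm])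
    exact ⟨σ, Or.inl (case_one hapos hgcd hST.symm hT hS σ (s0 ▸ hxT) (s1 ▸ hr) (s2 ▸ hs)
      (s3 ▸ hp) (s4 ▸ hq))⟩
  obtain ⟨σ, s0, s1, s2, s3, s4⟩ := exists_perm (x := x) (p := p) (q := q) (r := r) (s := s)
    (by simp [*])
  have hSpq : ∀ j, j ≠ p → j ≠ q → j ∉ S := by
    intro j h1 h2 hj
    have hjx : j ≠ x := fun h => hxS (h ▸ hj)
    exact hd j hj s hs (hx j hjx h1 h2 (hd j hj r hr))
  have hTrs : ∀ j, j ≠ r → j ≠ s → j ∉ T := by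
    intro j h1 h2 hj
    have hjx : j ≠ x := fun h => hxT (h ▸ hj)
    exact h2 (hx j hjx (hd p hp j hj).symm (hd q hq j hj).symm h1)
  have rowS : ∀ i ∈ S, ∀ j, j ≠ p → j ≠ q → A i j = 0 :=
    fun i hi j h1 h2 => hS i hi j (hSpq j h1 h2)
  have rowT : ∀ i ∈ T, ∀ j, j ≠ r → j ≠ s → A i j = 0 :=
    fun i hi j h1 h2 => hT i hi j (hTrs j h1 h2)
  obtain ⟨c₂, c₃, d, hc2, hc3, hdpos, hcop, app, apq, aqp, aqq, ep, eq'⟩ :=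
    two_block hapos hA hpq (rowS p hp) (rowS q hq)
  obtain ⟨c₄, c₅, e, hc4, hc5, hepos, hcop', -, -, -, -, er, es⟩ :=
    two_block hapos hA hrs (rowT r hr) (rowT s hs)
  refine ⟨σ, Or.inr ⟨?_, ?_, c₂, c₃, hc2, hc3, hcop, by rw [s1, app], by rw [s1, s2, apq],
    by rw [s1, s2, aqp], by rw [s2, aqq], d, e, c₄, c₅, hdpos, hepos, hc4, hc5, hcop', ?_,
    by rw [s1, ep], by rw [s2, eq'], by rw [s3, er], by rw [s4, es]⟩⟩
  · intro i j hi hj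
    rw [not_or] at hj
    refine rowS _ ?_ _ (s1 ▸ σ.injective.ne hj.1) (s2 ▸ σ.injective.ne hj.2)
    rcases hi with rfl | rfl
    · rwa [s1]
    · rwa [s2]
  · intro i j hi hj
    rw [not_or] at hj
    refine rowT _ ?_ _ (s3 ▸ σ.injective.ne hj.1) (s4 ▸ σ.injective.ne hj.2)
    rcases hi with rfl | rfl
    · rwa [s3]
    · rwa [s4]
  · rw [s0]
    set g := Nat.gcd (a x) (Nat.gcd d e) with hg
    have hgx : g ∣ a x := Nat.gcd_dvd_left _ _
    have hgd : g ∣ d := (Nat.gcd_dvd_right _ _).trans (Nat.gcd_dvd_left _ _)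
    have hge : g ∣ e := (Nat.gcd_dvd_right _ _).trans (Nat.gcd_dvd_right _ _)
    refine Nat.dvd_one.1 (hgcd ▸ Finset.dvd_gcd fun i _ => ?_)
    by_cases h1 : i = x
    · rw [h1]; exact hgx
    by_cases h2 : i = p
    · rw [h2, ep]; exact hgd.mul_right _
    by_cases h3 : i = q
    · rw [h3, eq']; exact hgd.mul_right _
    by_cases h4 : i = r
    · rw [h4, er]; exact hge.mul_right _
    · rw [hx i h1 h2 h3 h4, es]; exact hge.mul_right _
end

section
/- Let a_1, a_2, b_1, b_2, d, e be positive integers with gcd(a_1,a_2) = 1, gcd(b_1,b_2) = 1 and gcd(d,e) = 1, and suppose the four numbers d·a_1, d·a_2, e·b_1, e·b_2 minimally generate their numerical semigroup. Suppose further that the principal matrix of {d·a_1, d·a_2} ⊔ {e·b_1, e·b_2} is the concatenation of the principal matrices of (a_1, a_2) and (b_1, b_2); that is: a_2 is the smallest positive integer m with m·(d·a_1) in the additive submonoid of ℕ generated by {d·a_2, e·b_1, e·b_2}; a_1 is the smallest positive integer m with m·(d·a_2) in the submonoid generated by {d·a_1, e·b_1, e·b_2}; b_2 is the smallest positive integer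 m with m·(e·b_1) in the submonoid generated by {d·a_1, d·a_2, e·b_2}; and b_1 is the smallest positive integer m with m·(e·b_2) in the submonoid generated by {d·a_1, d·a_2, e·b_1}. Then d > b_1, d > b_2, e > a_1 and e > a_2. -/
/-!
The submonoids `⟨a₁, a₂⟩` and `⟨b₁, b₂⟩` are linked by the following transfer principle: if
`e * t ∈ ⟨a₁, a₂⟩` then `d * t ∈ ⟨b₁, b₂⟩`. Otherwise coprimality of `b₁, b₂` gives
`v * b₁ = d * t + w * b₂` with `0 < v < b₂`, and multiplying by `e` turns this into a relation
`v * (e * b₁) ∈ ⟨d * a₁, d * a₂, e * b₂⟩`, against the minimality of `b₂`.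

Transferring `t = a₁` gives `e * (d * a₁) ∈ ⟨e * b₁, e * b₂⟩`, so `a₂ ≤ e` by minimality of `a₂`.
If `e = a₂`, transferring `t = 1` gives `d * a₂ = e * d ∈ ⟨e * b₁, e * b₂⟩`, against minimal
generation. The other three bounds follow by the symmetries `a₁ ↔ a₂` and `(a, d) ↔ (b, e)`.
-/

/-- The alternative `n ∈ ⟨p, q⟩` or `n = v * p - w * q` with `0 < v < q`, for coprime `p, q`. -/
theorem repr_or_gap (p q n : ℕ) (hq : 0 < q) (h : Nat.Coprime p q) :
    (∃ v w, n = v * p + w * q) ∨ ∃ v w, 0 < v ∧ v < q ∧ v * p = n + w * q := by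
  obtain ⟨u, hu⟩ : ∃ u, p * u ≡ 1 [MOD q] := by
    obtain ⟨u, hu⟩ := Int.mod_coprime h
    refine ⟨(u % q).toNat, ?_⟩
    have hq' : (q : ℤ) ≠ 0 := by exact_mod_cast hq.ne'
    rw [← Int.natCast_modEq_iff]
    push_cast
    rw [Int.toNat_of_nonneg (Int.emod_nonneg _ hq')]
    exact ((Int.mod_modEq u q).mul_left p).trans hu
  have hv : (u * n) % q * p ≡ n [MOD q] := by
    calc (u * n) % q * p ≡ (u * n) * p [MOD q] := (Nat.mod_modEq _ _).mul_right p
      _ = (p * u) * n := by ring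
      _ ≡ 1 * n [MOD q] := hu.mul_right n
      _ = n := one_mul n
  have hlt : (u * n) % q < q := Nat.mod_lt _ hq
  generalize (u * n) % q = v at hv hlt
  rcases le_total (v * p) n with hle | hle
  · obtain ⟨w, hw⟩ := (Nat.modEq_iff_dvd' hle).1 hv
    exact Or.inl ⟨v, w, by rw [mul_comm w]; omega⟩
  · obtain ⟨w, hw⟩ := (Nat.modEq_iff_dvd' hle).1 hv.symm
    rcases Nat.eq_zero_or_pos v with rfl | hpos
    · exact Or.inl ⟨0, 0, by omega⟩
    · exact Or.inr ⟨v, w, hpos, hlt, by rw [mul_comm w]; omega⟩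

theorem mem_closure_three (p q r x y z : ℕ) :
    x * p + y * q + z * r ∈ AddSubmonoid.closure ({p, q, r} : Set ℕ) := by
  have key : ∀ (k s : ℕ), s ∈ ({p, q, r} : Set ℕ) →
      k * s ∈ AddSubmonoid.closure ({p, q, r} : Set ℕ) := fun k s hs => by
    simpa using AddSubmonoid.nsmul_mem _ (AddSubmonoid.subset_closure hs) k
  exact add_mem (add_mem (key x p (by simp)) (key y q (by simp))) (key z r (by simp))

/-- The transfer principle: `e * t ∈ ⟨a₁, a₂⟩` implies `d * t ∈ ⟨b₁, b₂⟩`. -/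
theorem transfer (a₁ a₂ b₁ b₂ d e t x y : ℕ) (hb₂ : 0 < b₂) (hb : Nat.gcd b₁ b₂ = 1)
    (h₃ : IsLeast {m : ℕ | 0 < m ∧
      m * (e * b₁) ∈ AddSubmonoid.closure ({d * a₁, d * a₂, e * b₂} : Set ℕ)} b₂)
    (ht : e * t = x * a₁ + y * a₂) : ∃ v w, d * t = v * b₁ + w * b₂ := by
  rcases repr_or_gap b₁ b₂ (d * t) hb₂ hb with h | ⟨v, w, hv, hlt, h⟩
  · exact h
  · refine absurd (h₃.2 ⟨hv, ?_⟩) (not_le.2 hlt)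
    have : v * (e * b₁) = x * (d * a₁) + y * (d * a₂) + w * (e * b₂) := by
      linear_combination e * h + d * ht
    rw [this]
    exact mem_closure_three _ _ _ _ _ _

/-- One of the four bounds; the others are obtained from it by symmetry. -/
theorem lt_of_isLeast (a₁ a₂ b₁ b₂ d e : ℕ) (hb₂ : 0 < b₂) (he : 0 < e)
    (hb : Nat.gcd b₁ b₂ = 1)
    (hmin₂ : d * a₂ ∉ AddSubmonoid.closure ({d * a₁, e * b₁, e * b₂} : Set ℕ))
    (h₁ : IsLeast {m : ℕ | 0 < m ∧
      m * (d * a₁) ∈ AddSubmonoid.closure ({d * a₂, e * b₁, e * b₂} : Set ℕ)} a₂)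
    (h₃ : IsLeast {m : ℕ | 0 < m ∧
      m * (e * b₁) ∈ AddSubmonoid.closure ({d * a₁, d * a₂, e * b₂} : Set ℕ)} b₂) :
    a₂ < e := by
  refine lt_of_le_of_ne (h₁.2 ⟨he, ?_⟩) fun hea => hmin₂ ?_
  · obtain ⟨v, w, h⟩ := transfer a₁ a₂ b₁ b₂ d e a₁ e 0 hb₂ hb h₃ (by ring)
    have : e * (d * a₁) = 0 * (d * a₂) + v * (e * b₁) + w * (e * b₂) := by
      linear_combination e * h
    rw [this]
    exact mem_closure_three _ _ _ _ _ _
  · obtain ⟨v, w, h⟩ := transfer a₁ a₂ b₁ b₂ d e 1 0 1 hb₂ hb h₃ (by rw [hea]; ring)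
    have : d * a₂ = 0 * (d * a₁) + v * (e * b₁) + w * (e * b₂) := by
      linear_combination e * h + d * hea
    rw [this]
    exact mem_closure_three _ _ _ _ _ _

/-- let `C = d{a₁,a₂} ⊔ e{b₁,b₂}` minimally generate its numerical
semigroup, with `gcd(a₁,a₂) = gcd(b₁,b₂) = gcd(d,e) = 1`, and suppose the principal
matrix of `C` is the concatenation of the principal matrices of `(a₁,a₂)` and `(b₁,b₂)`
(expressed via the four `IsLeast` conditions below).  Then `d > b₁, b₂` and
`e > a₁, a₂`. -/
theorem bounds_of_concatenated_principal_matrix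
    (a₁ a₂ b₁ b₂ d e : ℕ)
    (ha₁ : 0 < a₁) (ha₂ : 0 < a₂) (hb₁ : 0 < b₁) (hb₂ : 0 < b₂)
    (hd : 0 < d) (he : 0 < e)
    (hgcda : Nat.gcd a₁ a₂ = 1) (hgcdb : Nat.gcd b₁ b₂ = 1) (hgcdde : Nat.gcd d e = 1)
    (hmin₁ : d * a₁ ∉ AddSubmonoid.closure ({d * a₂, e * b₁, e * b₂} : Set ℕ))
    (hmin₂ : d * a₂ ∉ AddSubmonoid.closure ({d * a₁, e * b₁, e * b₂} : Set ℕ))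
    (hmin₃ : e * b₁ ∉ AddSubmonoid.closure ({d * a₁, d * a₂, e * b₂} : Set ℕ))
    (hmin₄ : e * b₂ ∉ AddSubmonoid.closure ({d * a₁, d * a₂, e * b₁} : Set ℕ))
    (h₁ : IsLeast {m : ℕ | 0 < m ∧
      m * (d * a₁) ∈ AddSubmonoid.closure ({d * a₂, e * b₁, e * b₂} : Set ℕ)} a₂)
    (h₂ : IsLeast {m : ℕ | 0 < m ∧
      m * (d * a₂) ∈ AddSubmonoid.closure ({d * a₁, e * b₁, e * b₂} : Set ℕ)} a₁)
    (h₃ : IsLeast {m : ℕ | 0 < m ∧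
      m * (e * b₁) ∈ AddSubmonoid.closure ({d * a₁, d * a₂, e * b₂} : Set ℕ)} b₂)
    (h₄ : IsLeast {m : ℕ | 0 < m ∧
      m * (e * b₂) ∈ AddSubmonoid.closure ({d * a₁, d * a₂, e * b₁} : Set ℕ)} b₁) :
    b₁ < d ∧ b₂ < d ∧ a₁ < e ∧ a₂ < e := by
  -- Reorderings of the generating triples needed to exchange the roles of the two pairs.
  have rot : ∀ p q r : ℕ, ({p, q, r} : Set ℕ) = {r, p, q} := fun p q r => by
    ext; simp only [Set.mem_insert_iff, Set.mem_singleton_iff]; tauto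
  have swap : ∀ p q r : ℕ, ({p, q, r} : Set ℕ) = {q, p, r} := fun p q r => Set.insert_comm p q _
  have h₁' := h₁
  rw [← rot] at h₁'
  refine ⟨?_, ?_, ?_, ?_⟩
  · exact lt_of_isLeast b₂ b₁ a₁ a₂ e d ha₂ hd hgcda (by rw [rot, rot]; exact hmin₃) (by rw [rot, rot]; exact h₄)
      (by rw [swap]; exact h₁')
  · exact lt_of_isLeast b₁ b₂ a₁ a₂ e d ha₂ hd hgcda (by rw [rot, rot]; exact hmin₄) (by rw [rot, rot]; exact h₃) h₁'
  · exact lt_of_isLeast a₂ a₁ b₁ b₂ d e hb₂ he hgcdb hmin₁ h₂ (by rw [swap]; exact h₃)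
  · exact lt_of_isLeast a₁ a₂ b₁ b₂ d e hb₂ he hgcdb hmin₂ h₁ h₃
end

section
/- Let A be an n×n pseudo principal matrix of rank n−1 with A·a = 0 for a vector a of positive integers. Then no principal minor of A of size n−1 vanishes (Δ_I ≠ 0 for every I with |I| = n−1) if and only if the system Aᵀ·X = 0 has a solution X all of whose entries are positive integers. -/
open Matrix

/-- The restriction of `v` to `univ \ {j}` loses nothing since `v j = 0`, and it lies in the kernel
of the nonsingular principal submatrix. -/
lemma eq_zero_of_pminor_ne_zero {n : ℕ} (A : Matrix (Fin n) (Fin n) ℤ) (j : Fin n)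
    (h : pminor A (Finset.univ.erase j) ≠ 0) (v : Fin n → ℤ) (hj : v j = 0)
    (hv : ∀ i, i ≠ j → (A *ᵥ v) i = 0) : v = 0 := by
  have key := Matrix.eq_zero_of_mulVec_eq_zero (M := A.submatrix
    (fun i : {x : Fin n // x ∈ Finset.univ.erase j} => (i : Fin n))
    (fun i : {x : Fin n // x ∈ Finset.univ.erase j} => (i : Fin n))) h
    (v := fun i => v i) (by
      funext i
      have hi := hv i (Finset.ne_of_mem_erase i.2)
      rw [Matrix.mulVec, dotProduct, ← Finset.sum_erase _ (a := j) (by simp [hj])] at hi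
      rw [← Finset.sum_coe_sort] at hi
      exact hi)
  funext i
  by_cases hij : i = j
  · rw [hij, hj]; rfl
  · exact congrFun key ⟨i, by simp [hij]⟩

/-- The vector is a kernel vector of the singular principal submatrix, extended by zero at `j`. -/
lemma exists_of_pminor_eq_zero {n : ℕ} (A : Matrix (Fin n) (Fin n) ℤ) (j : Fin n)
    (h : pminor A (Finset.univ.erase j) = 0) :
    ∃ v : Fin n → ℤ, v ≠ 0 ∧ v j = 0 ∧ ∀ i, i ≠ j → (A *ᵥ v) i = 0 := by
  obtain ⟨u, hu0, hu⟩ := Matrix.exists_mulVec_eq_zero_iff.mpr h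
  refine ⟨fun i => if hi : i ∈ Finset.univ.erase j then u ⟨i, hi⟩ else 0, ?_, by simp, ?_⟩
  · contrapose! hu0
    funext i
    have := congrFun hu0 i
    exact (dif_pos i.2).symm.trans this
  · intro i hij
    have hi := congrFun hu ⟨i, by simp [hij]⟩
    rw [Matrix.mulVec, dotProduct, ← Finset.sum_erase _ (a := j) (by simp),
      ← Finset.sum_coe_sort]
    refine Eq.trans ?_ hi
    refine Finset.sum_congr rfl fun x _ => ?_
    rw [dif_pos x.2]
    rfl

/-- The entrywise absolute value of a left kernel vector is again a left kernel vector: it is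
mapped to a nonnegative vector, whose pairing with the positive vector `a` is zero. -/
lemma abs_vecMul_eq_zero {n : ℕ} (A : Matrix (Fin n) (Fin n) ℤ)
    (hdiag : ∀ i, A i i < 0) (hoff : ∀ i j, i ≠ j → 0 ≤ A i j)
    (a : Fin n → ℤ) (hapos : ∀ i, 0 < a i) (hAa : A *ᵥ a = 0)
    (Y : Fin n → ℤ) (hY : Y ᵥ* A = 0) : (fun i => |Y i|) ᵥ* A = 0 := by
  have hnn : ∀ j, 0 ≤ ((fun i => |Y i|) ᵥ* A) j := by
    intro j
    have h0 := congrFun hY j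
    simp only [Matrix.vecMul, dotProduct, Pi.zero_apply] at h0 ⊢
    rw [← Finset.add_sum_erase _ _ (Finset.mem_univ j)] at h0 ⊢
    have h1 : |Y j| * (-A j j) ≤ ∑ i ∈ Finset.univ.erase j, |Y i| * A i j := by
      calc |Y j| * (-A j j) = |∑ i ∈ Finset.univ.erase j, Y i * A i j| := by
            rw [← abs_of_pos (neg_pos.mpr (hdiag j)), ← abs_mul]
            congr 1
            linarith
        _ ≤ ∑ i ∈ Finset.univ.erase j, |Y i * A i j| := Finset.abs_sum_le_sum_abs _ _
        _ = _ := Finset.sum_congr rfl fun i hi => by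
            rw [abs_mul, abs_of_nonneg (hoff i j (Finset.ne_of_mem_erase hi))]
    linarith
  have hsum : ((fun i => |Y i|) ᵥ* A) ⬝ᵥ a = 0 := by
    rw [← Matrix.dotProduct_mulVec, hAa, dotProduct_zero]
  funext j
  have := (Finset.sum_eq_zero_iff_of_nonneg
    (fun i _ => mul_nonneg (hnn i) (hapos i).le)).mp hsum j (Finset.mem_univ j)
  exact (mul_eq_zero.mp this).resolve_right (hapos j).ne'

/-- The kernel of `A` over `ℚ` is a line (or zero), so a kernel vector that vanishes at a coordinate
where another one, `a`, does not is zero. -/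
lemma eq_zero_of_rank {n : ℕ} (A : Matrix (Fin n) (Fin n) ℤ)
    (hrank : (A.map (Int.cast : ℤ → ℚ)).rank = n - 1)
    (a : Fin n → ℤ) (hAa : A *ᵥ a = 0) (v : Fin n → ℤ) (hv : A *ᵥ v = 0) (j : Fin n)
    (haj : a j ≠ 0) (hvj : v j = 0) : v = 0 := by
  set M := A.map (Int.cast : ℤ → ℚ)
  have hker : ∀ w : Fin n → ℤ, A *ᵥ w = 0 →
      (fun i => (w i : ℚ)) ∈ LinearMap.ker M.mulVecLin := by
    intro w hw
    rw [LinearMap.mem_ker, Matrix.mulVecLin_apply]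
    funext i
    have := congrArg (Int.cast : ℤ → ℚ) (congrFun hw i)
    simpa [M, Matrix.mulVec, dotProduct] using this
  have hfin : Module.finrank ℚ (LinearMap.ker M.mulVecLin) ≤ 1 := by
    have := LinearMap.finrank_range_add_finrank_ker M.mulVecLin
    rw [show Module.finrank ℚ (LinearMap.range M.mulVecLin) = n - 1 from hrank] at this
    simp at this
    omega
  obtain ⟨u, hu⟩ := finrank_le_one_iff.mp hfin
  obtain ⟨c, hc⟩ := hu ⟨_, hker v hv⟩
  obtain ⟨d, hd⟩ := hu ⟨_, hker a hAa⟩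
  have hc' : ∀ i, c * u.1 i = v i := fun i => congrFun (congrArg Subtype.val hc) i
  have hd' : ∀ i, d * u.1 i = a i := fun i => congrFun (congrArg Subtype.val hd) i
  have huj : u.1 j ≠ 0 := by
    intro h
    have := hd' j
    rw [h, mul_zero] at this
    exact haj (by exact_mod_cast this.symm)
  have hc0 : c = 0 := by
    have := hc' j
    rw [hvj, Int.cast_zero] at this
    exact (mul_eq_zero.mp this).resolve_right huj
  funext i
  have := hc' i
  rw [hc0, zero_mul] at this
  exact_mod_cast this.symm

/-- The diagonal entry is the determinant of `A` with row `j` replaced by a unit vector; a kernel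
vector of that matrix vanishes at `j` and is killed by the other rows of `A`. -/
lemma adjugate_diag_ne_zero {n : ℕ} (A : Matrix (Fin n) (Fin n) ℤ) (j : Fin n)
    (h : pminor A (Finset.univ.erase j) ≠ 0) : A.adjugate j j ≠ 0 := by
  rw [Matrix.adjugate_apply]
  intro h0
  obtain ⟨v, hv0, hv⟩ := Matrix.exists_mulVec_eq_zero_iff.mpr h0
  refine hv0 (eq_zero_of_pminor_ne_zero A j h v ?_ fun i hi => ?_)
  · have := congrFun hv j
    simpa [Matrix.mulVec] using this
  · have := congrFun hv i
    simpa [Matrix.mulVec, Matrix.updateRow_ne hi] using this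

/-- for a pseudo principal matrix `A` of rank `n - 1` with `A·a = 0`,
`a` positive, none of the principal minors of size `n - 1` vanish if and only if
`Aᵀ·X = 0` has a solution in positive integers. -/
theorem no_vanishing_pminor_iff_transpose_kernel_pos {n : ℕ}
    (A : Matrix (Fin n) (Fin n) ℤ)
    (hdiag : ∀ i, A i i < 0) (hoff : ∀ i j, i ≠ j → 0 ≤ A i j)
    (a : Fin n → ℤ) (hapos : ∀ i, 0 < a i) (hAa : A.mulVec a = 0)
    (hrank : (A.map (Int.cast : ℤ → ℚ)).rank = n - 1) :
    (∀ I : Finset (Fin n), I.card = n - 1 → pminor A I ≠ 0) ↔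
      ∃ X : Fin n → ℤ, (∀ i, 0 < X i) ∧ A.transpose.mulVec X = 0 := by
  constructor
  · intro h
    rcases isEmpty_or_nonempty (Fin n) with hE | ⟨⟨i₀⟩⟩
    · exact ⟨fun _ => 1, fun _ => one_pos, Subsingleton.elim _ _⟩
    have hmin : ∀ j, pminor A (Finset.univ.erase j) ≠ 0 := fun j => h _ (by simp)
    have hdet : A.det = 0 :=
      Matrix.exists_mulVec_eq_zero_iff.mp
        ⟨a, fun h0 => (hapos i₀).ne' (congrFun h0 i₀), hAa⟩
    have hrow : A.adjugate i₀ ᵥ* A = 0 := by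
      have := A.adjugate_mul
      rw [hdet, zero_smul] at this
      exact congrFun this i₀
    refine ⟨fun j => |A.adjugate i₀ j|, fun j => abs_pos.mpr ?_, ?_⟩
    · have hcol : A *ᵥ (fun i => A.adjugate i j) = 0 := by
        have := A.mul_adjugate
        rw [hdet, zero_smul] at this
        funext i
        exact congrFun (congrFun this i) j
      -- This combination of column `j` and `a` lies in the kernel and vanishes at `j`.
      have hw := eq_zero_of_pminor_ne_zero A j (hmin j)
        (a j • (fun i => A.adjugate i j) - A.adjugate j j • a)
        (by simp [mul_comm])
        (fun i _ => by
          rw [Matrix.mulVec_sub, Matrix.mulVec_smul, Matrix.mulVec_smul, hcol, hAa]; simp)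
      have hi := congrFun hw i₀
      simp only [Pi.sub_apply, Pi.smul_apply, smul_eq_mul, Pi.zero_apply] at hi
      intro h0
      rw [h0, mul_zero, zero_sub, neg_eq_zero] at hi
      exact mul_ne_zero (adjugate_diag_ne_zero A j (hmin j)) (hapos i₀).ne' hi
    · rw [Matrix.mulVec_transpose]
      exact abs_vecMul_eq_zero A hdiag hoff a hapos hAa _ hrow
  · rintro ⟨X, hX, hXA⟩ I hI h0
    rw [Matrix.mulVec_transpose] at hXA
    rcases Nat.eq_zero_or_pos n with rfl | hn
    · have : IsEmpty {x : Fin 0 // x ∈ I} := ⟨fun x => x.1.elim0⟩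
      simp [pminor] at h0
    obtain ⟨j, hj⟩ : ∃ j, Iᶜ = {j} := Finset.card_eq_one.mp (by
      rw [Finset.card_compl, hI, Fintype.card_fin]; omega)
    obtain rfl : I = Finset.univ.erase j := by
      rw [← compl_compl I, hj]; ext; simp
    obtain ⟨v, hv0, hvj, hv⟩ := exists_of_pminor_eq_zero A j h0
    have hpair : X ⬝ᵥ (A *ᵥ v) = 0 := by
      rw [Matrix.dotProduct_mulVec, hXA, zero_dotProduct]
    rw [dotProduct, Finset.sum_eq_single j (fun i _ hij => by rw [hv i hij, mul_zero])
      (by simp)] at hpair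
    refine hv0 (eq_zero_of_rank A hrank a hAa v ?_ j (hapos j).ne' hvj)
    funext i
    by_cases hij : i = j
    · rw [hij]
      exact (mul_eq_zero.mp hpair).resolve_left (hX j).ne'
    · exact hv i hij
end

section
/- Let A be an n×n pseudo principal matrix. Then for every subset I ⊆ {1,…,n}, the principal minor Δ_I satisfies (−1)^{|I|}·Δ_I ≥ 0; that is, Δ_I ≥ 0 if |I| is even and Δ_I ≤ 0 if |I| is odd. -/
/-- Gershgorin's theorem applied to `t - B` with its columns scaled by `a`: a matrix with
nonnegative off-diagonal entries and `B a ≤ 0` for some `a > 0` has no positive eigenvalue. -/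
lemma det_scalar_sub_ne_zero {ι : Type*} [Fintype ι] [DecidableEq ι] (B : Matrix ι ι ℝ)
    (a : ι → ℝ) (ha : ∀ i, 0 < a i) (hoff : ∀ i j, i ≠ j → 0 ≤ B i j)
    (hsum : ∀ i, ∑ j, B i j * a j ≤ 0) {t : ℝ} (ht : 0 < t) :
    (Matrix.scalar ι t - B).det ≠ 0 := by
  have key : ((Matrix.scalar ι t - B) * Matrix.diagonal a).det ≠ 0 := by
    apply det_ne_zero_of_sum_row_lt_diag
    intro k
    have h1 : ∑ j ∈ Finset.univ.erase k, ‖((Matrix.scalar ι t - B) * Matrix.diagonal a) k j‖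
        = ∑ j ∈ Finset.univ.erase k, B k j * a j := by
      refine Finset.sum_congr rfl fun j hj => ?_
      have hkj : k ≠ j := (Finset.ne_of_mem_erase hj).symm
      rw [Matrix.mul_diagonal, Matrix.sub_apply, Matrix.scalar_apply,
        Matrix.diagonal_apply_ne _ hkj, zero_sub, neg_mul, norm_neg, Real.norm_eq_abs,
        abs_of_nonneg (mul_nonneg (hoff k j hkj) (ha j).le)]
    have h2 := Finset.add_sum_erase Finset.univ (fun j => B k j * a j) (Finset.mem_univ k)
    have h3 := hsum k
    have h4 := mul_pos ht (ha k)
    rw [h1, Matrix.mul_diagonal, Matrix.sub_apply, Matrix.scalar_apply, Matrix.diagonal_apply_eq]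
    refine lt_of_lt_of_le ?_ (le_abs_self _)
    linarith
  rw [Matrix.det_mul] at key
  exact left_ne_zero_of_mul key

lemma det_neg_nonneg {ι : Type*} [Fintype ι] [DecidableEq ι] (B : Matrix ι ι ℝ)
    (a : ι → ℝ) (ha : ∀ i, 0 < a i) (hoff : ∀ i j, i ≠ j → 0 ≤ B i j)
    (hsum : ∀ i, ∑ j, B i j * a j ≤ 0) : 0 ≤ (-B).det := by
  have h0 : B.charpoly.eval 0 = (-B).det := by simp [Matrix.eval_charpoly]
  by_contra! hneg
  rw [← h0] at hneg
  have hdeg : 0 < B.charpoly.degree := by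
    by_contra! hd
    rw [B.charpoly_monic.degree_le_zero_iff_eq_one.mp hd, Polynomial.eval_one] at hneg
    linarith
  have htop := B.charpoly.tendsto_atTop_of_leadingCoeff_nonneg hdeg
    (by rw [B.charpoly_monic.leadingCoeff]; exact zero_le_one)
  obtain ⟨x, hx, hx0⟩ :=
    ((htop.eventually_ge_atTop 0).and (Filter.eventually_gt_atTop 0)).exists
  obtain ⟨c, hc, hc0⟩ :=
    intermediate_value_Icc hx0.le B.charpoly.continuous.continuousOn ⟨hneg.le, hx⟩
  have hcpos : 0 < c := by
    refine lt_of_le_of_ne hc.1 ?_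
    rintro rfl
    exact hneg.ne hc0
  refine det_scalar_sub_ne_zero B a ha hoff hsum hcpos ?_
  rw [← Matrix.eval_charpoly]
  exact hc0

/-- the principal minors of a pseudo principal matrix satisfy
`(-1)^{|I|} Δ_I ≥ 0`. -/
theorem sign_pminor_of_isPseudoPrincipal {n : ℕ} (A : Matrix (Fin n) (Fin n) ℤ)
    (hA : A.IsPseudoPrincipal) (I : Finset (Fin n)) :
    0 ≤ (-1 : ℤ) ^ I.card * pminor A I := by
  obtain ⟨-, hoff, a, ha, hAa⟩ := hA
  set B : Matrix {x : Fin n // x ∈ I} {x : Fin n // x ∈ I} ℤ :=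
    A.submatrix (fun i => (i : Fin n)) (fun j => (j : Fin n)) with hB
  have hdet : (-1 : ℤ) ^ I.card * pminor A I = (-B).det := by
    rw [Matrix.det_neg, Fintype.card_coe]
    rfl
  -- Restricting `A a = 0` to `I`: for a row `i ∈ I`, every discarded column is off-diagonal.
  have hsum : ∀ i, ∑ j, B i j * a j ≤ 0 := by
    intro i
    have hrow : ∑ j, A i j * a j = 0 := congrFun hAa i
    have hres : ∑ j, B i j * a j = ∑ j ∈ I, A i j * a j :=
      Finset.sum_coe_sort I (fun j => A i j * a j)
    rw [hres, ← hrow]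
    refine Finset.sum_le_sum_of_subset_of_nonneg (Finset.subset_univ I) fun j _ hj => ?_
    exact mul_nonneg (hoff i j fun h => hj (h ▸ i.2)) (ha j).le
  have hreal := det_neg_nonneg (B.map (Int.cast : ℤ → ℝ)) (fun i => (a i : ℝ))
    (fun i => by exact_mod_cast ha i)
    (fun i j hij => by
      have := hoff i j (fun h => hij (Subtype.ext h))
      simpa [hB] using this)
    (fun i => by
      have := hsum i
      simp only [Matrix.map_apply]
      exact_mod_cast this)
  rw [hdet]
  have hcast : (((-B).det : ℤ) : ℝ) = (-(B.map (Int.cast : ℤ → ℝ))).det := by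
    rw [Int.cast_det]
    congr 1
    ext i j
    simp
  rw [← hcast] at hreal
  exact_mod_cast hreal
end

section
/- Let A be an n×n pseudo principal matrix, let I ⊆ {1,…,n}, and let p, q ∉ I with p ≠ q. Let M be the (|I|+1)×(|I|+1) matrix whose rows are the rows of A indexed by the elements of I in increasing order followed by row p, and whose columns are indexed by the elements of I in increasing order followed by column q. Then (−1)^{|I|}·det(M) ≥ 0. -/
/-!
The sign is read off from Gaussian elimination. Call the last row and column of the
`(k + 1) × (k + 1)` minor special. All its entries are nonnegative except the first `k` diagonal
ones, and its leading `k × k` block `B` satisfies `B a ≤ 0` for a positive vector `a`, namely the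
restriction of the kernel vector of `A`. If `B a < 0` strictly, then the top left entry is negative,
and the Schur complement with respect to it has the same properties with `k` replaced by `k - 1`.
So each of the `k` pivots contributes a factor `-1`, and the last remaining entry is nonnegative
(`sign_det_of_mulVec_neg`). The weak inequality follows by subtracting `t > 0` from the first `k`
diagonal entries and letting `t` tend to `0` (`sign_det_of_mulVec_nonpos`).
-/

/-- One step of Gaussian elimination. -/
lemma det_eq_pivot_mul_det_schur {k : ℕ} (N : Matrix (Fin (k + 1)) (Fin (k + 1)) ℝ)
    (h0 : N 0 0 ≠ 0) :
    N.det = N 0 0 *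
      (Matrix.of fun i j : Fin k =>
        N i.succ j.succ - N i.succ 0 * N 0 j.succ / N 0 0).det := by
  let B : Matrix (Fin (k + 1)) (Fin (k + 1)) ℝ := Matrix.of fun i j =>
    N i j - (if i = 0 then 0 else N i 0 / N 0 0) * N 0 j
  have hB : N.det = B.det := by
    refine Matrix.det_eq_of_forall_row_eq_smul_add_const
      (fun i => if i = 0 then 0 else N i 0 / N 0 0) 0 (by simp) ?_
    intro i j
    simp [B]
  rw [hB, Matrix.det_succ_column_zero, Fin.sum_univ_succ, Finset.sum_eq_zero]
  · have h00 : B 0 0 = N 0 0 := by simp [B]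
    rw [h00]
    simp only [Fin.val_zero, pow_zero, one_mul, add_zero]
    congr 2
    ext i j
    simp [B, Matrix.submatrix_apply, Fin.succ_ne_zero]
    ring
  · intro i _
    have : B i.succ 0 = 0 := by
      simp [B, Fin.succ_ne_zero, h0]
    simp [this]

/-- The strict case. The last index is special: its diagonal entry is nonnegative, and the sums
run over the other indices only. -/
lemma sign_det_of_mulVec_neg : ∀ (k : ℕ) (N : Matrix (Fin (k + 1)) (Fin (k + 1)) ℝ)
    (a : Fin k → ℝ), (∀ i j, i ≠ j → 0 ≤ N i j) → 0 ≤ N (Fin.last k) (Fin.last k) →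
    (∀ j, 0 < a j) → (∀ i : Fin k, ∑ j : Fin k, N i.castSucc j.castSucc * a j < 0) →
    0 ≤ (-1 : ℝ) ^ k * N.det
  | 0, N, _, _, hl, _, _ => by simpa using hl
  | k + 1, N, a, hN, hl, ha, hs => by
    have h00 : N 0 0 < 0 := by
      have h := hs 0
      rw [Fin.sum_univ_succ] at h
      have h' : 0 ≤ ∑ j : Fin k, N (Fin.castSucc 0) j.succ.castSucc * a j.succ :=
        Finset.sum_nonneg fun j _ => mul_nonneg
          (hN _ _ (by simp [Fin.ext_iff])) (ha _).le
      simp only [Fin.castSucc_zero] at h h'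
      by_contra! hc
      have := mul_nonneg hc (ha 0).le
      linarith
    have hcorr : ∀ i j : Fin (k + 1), 0 ≤ -(N i.succ 0 * N 0 j.succ / N 0 0) := fun i j =>
      neg_nonneg.2 (div_nonpos_of_nonneg_of_nonpos
        (mul_nonneg (hN _ _ (Fin.succ_ne_zero i)) (hN _ _ (Fin.succ_ne_zero j).symm)) h00.le)
    have ih := sign_det_of_mulVec_neg k
      (Matrix.of fun i j => N i.succ j.succ - N i.succ 0 * N 0 j.succ / N 0 0)
      (fun j => a j.succ) (fun i j hij => ?_) ?_ (fun j => ha _) (fun i => ?_)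
    · rw [det_eq_pivot_mul_det_schur N h00.ne, pow_succ]
      have := mul_nonneg (neg_nonneg.2 h00.le) ih
      linarith
    · have h1 := hN i.succ j.succ (by simpa using hij)
      have h2 := hcorr i j
      simp only [Matrix.of_apply]
      linarith
    · have h2 := hcorr (Fin.last k) (Fin.last k)
      simp only [Matrix.of_apply, Fin.succ_last] at h2 ⊢
      linarith
    · have h1 := hs i.succ
      have h2 := hs 0
      rw [Fin.sum_univ_succ] at h1 h2
      simp only [Fin.castSucc_zero, Matrix.of_apply, ← Fin.succ_castSucc] at h1 h2 ⊢
      -- Row `i` of the Schur complement applied to `a` is row `i + 1` of `N` applied to `a`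
      -- minus `c` times row `0` of `N` applied to `a`.
      set c := N i.castSucc.succ 0 / N 0 0 with hc
      have hc0 : c ≤ 0 := div_nonpos_of_nonneg_of_nonpos (hN _ _ (Fin.succ_ne_zero _)) h00.le
      have hcN : N i.castSucc.succ 0 = c * N 0 0 := by
        rw [hc, div_mul_cancel₀ _ h00.ne]
      have he : ∑ j : Fin k, (N i.castSucc.succ j.castSucc.succ
            - N i.castSucc.succ 0 * N 0 j.castSucc.succ / N 0 0) * a j.succ
          = ∑ j : Fin k, N i.castSucc.succ j.castSucc.succ * a j.succ
            - c * ∑ j : Fin k, N 0 j.castSucc.succ * a j.succ := by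
        rw [Finset.mul_sum, ← Finset.sum_sub_distrib]
        refine Finset.sum_congr rfl fun j _ => ?_
        rw [hc]
        ring
      rw [he]
      rw [hcN] at h1
      have := mul_nonneg_of_nonpos_of_nonpos hc0 h2.le
      linarith

open Filter Topology in
lemma sign_det_of_mulVec_nonpos (k : ℕ) (N : Matrix (Fin (k + 1)) (Fin (k + 1)) ℝ)
    (a : Fin k → ℝ) (hN : ∀ i j, i ≠ j → 0 ≤ N i j) (hl : 0 ≤ N (Fin.last k) (Fin.last k))
    (ha : ∀ j, 0 < a j) (hs : ∀ i : Fin k, ∑ j : Fin k, N i.castSucc j.castSucc * a j ≤ 0) :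
    0 ≤ (-1 : ℝ) ^ k * N.det := by
  let D : Matrix (Fin (k + 1)) (Fin (k + 1)) ℝ :=
    Matrix.diagonal (Fin.snoc (fun _ => 1) 0)
  have hcont : Continuous fun t : ℝ => (-1 : ℝ) ^ k * (N - t • D).det :=
    continuous_const.mul (Continuous.matrix_det (by fun_prop))
  have hlim : Tendsto (fun t : ℝ => (-1 : ℝ) ^ k * (N - t • D).det) (𝓝[>] 0)
      (𝓝 ((-1 : ℝ) ^ k * N.det)) := by
    have := (hcont.tendsto 0).mono_left (nhdsWithin_le_nhds (s := Set.Ioi 0))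
    simpa using this
  refine ge_of_tendsto hlim (eventually_nhdsWithin_of_forall fun t (ht : 0 < t) => ?_)
  refine sign_det_of_mulVec_neg k _ a (fun i j hij => ?_) ?_ ha (fun i => ?_)
  · simpa [D, Matrix.diagonal_apply_ne _ hij] using hN i j hij
  · simpa [D] using hl
  · have he : ∑ j : Fin k, (N - t • D) i.castSucc j.castSucc * a j
        = ∑ j : Fin k, N i.castSucc j.castSucc * a j - t * a i := by
      simp [D, sub_mul, Finset.sum_sub_distrib, Matrix.diagonal_apply]
    rw [he]
    have := mul_pos ht (ha i)
    linarith [hs i]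


/-- for a pseudo principal matrix `A`, a set `I` of indices and two further
indices `p ≠ q` not in `I`, the minor of `A` on the rows `I` (in increasing order)
followed by row `p`, and the columns `I` (in increasing order) followed by column `q`,
satisfies `(-1)^{|I|}·det ≥ 0`. -/
theorem sign_mixed_minor_of_isPseudoPrincipal {n : ℕ} (A : Matrix (Fin n) (Fin n) ℤ)
    (hA : A.IsPseudoPrincipal) (I : Finset (Fin n)) (p q : Fin n)
    (hp : p ∉ I) (hq : q ∉ I) (hpq : p ≠ q) :
    0 ≤ (-1 : ℤ) ^ I.card *
      (A.submatrix
        (Fin.snoc (fun l : Fin I.card => I.orderEmbOfFin rfl l) p)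
        (Fin.snoc (fun l : Fin I.card => I.orderEmbOfFin rfl l) q)).det := by
  obtain ⟨-, hoff, a, ha, hker⟩ := hA
  have hmem : ∀ l : Fin I.card, I.orderEmbOfFin rfl l ∈ I := I.orderEmbOfFin_mem rfl
  have key := sign_det_of_mulVec_nonpos I.card
    ((A.submatrix
        (Fin.snoc (fun l : Fin I.card => I.orderEmbOfFin rfl l) p)
        (Fin.snoc (fun l : Fin I.card => I.orderEmbOfFin rfl l) q)).map (Int.castRingHom ℝ))
    (fun l => a (I.orderEmbOfFin rfl l)) (fun i j hij => ?_) ?_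
    (fun j => by exact_mod_cast ha _) (fun i => ?_)
  · rw [← RingHom.mapMatrix_apply, ← RingHom.map_det] at key
    simp only [Int.coe_castRingHom] at key
    exact_mod_cast key
  · simp only [Matrix.map_apply, Matrix.submatrix_apply, Int.coe_castRingHom, Int.cast_nonneg_iff]
    apply hoff
    induction i using Fin.lastCases with
    | last =>
      induction j using Fin.lastCases with
      | last => exact absurd rfl hij
      | cast j =>
        simp only [Fin.snoc_last, Fin.snoc_castSucc]
        exact fun h => hp (h ▸ hmem j)
    | cast i =>
      induction j using Fin.lastCases with
      | last =>
        simp only [Fin.snoc_last, Fin.snoc_castSucc]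
        exact fun h => hq (h ▸ hmem i)
      | cast j =>
        simp only [Fin.snoc_castSucc]
        exact fun h => hij (congrArg _ ((I.orderEmbOfFin rfl).injective h))
  · simpa using hoff p q hpq
  · simp only [Matrix.map_apply, Matrix.submatrix_apply, Int.coe_castRingHom, Fin.snoc_castSucc]
    set r := I.orderEmbOfFin rfl i with hr
    have hsum : ∑ j : Fin I.card, A r (I.orderEmbOfFin rfl j) * a (I.orderEmbOfFin rfl j)
        = ∑ j ∈ I, A r j * a j := by
      conv_rhs => rw [← I.map_orderEmbOfFin_univ rfl, Finset.sum_map]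
      rfl
    have hrow : ∑ j, A r j * a j = 0 := congrFun hker r
    have hle : ∑ j ∈ I, A r j * a j ≤ ∑ j, A r j * a j :=
      Finset.sum_le_sum_of_subset_of_nonneg (Finset.subset_univ I) fun j _ hj =>
        mul_nonneg (hoff r j fun h => hj (h ▸ hmem i)) (ha j).le
    rw [hrow, ← hsum] at hle
    exact_mod_cast hle
end

section
/- Let A be an n×n pseudo principal matrix and let I ⊆ {1,…,n}. If the principal minor Δ_I equals 0, then Δ_{I ∪ {j}} = 0 for every j ∈ {1,…,n}. -/
open Finset

/-- Singularity of a principal submatrix, expressed by a vector on the full index set supported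
in `I`, which avoids working with subtypes. -/
lemma pminor_eq_zero_iff {n : ℕ} (A : Matrix (Fin n) (Fin n) ℤ) (I : Finset (Fin n)) :
    pminor A I = 0 ↔ ∃ x : Fin n → ℤ, x ≠ 0 ∧ (∀ i, i ∉ I → x i = 0) ∧
      ∀ i ∈ I, ∑ k, A i k * x k = 0 := by
  have key : ∀ (x : Fin n → ℤ), (∀ i, i ∉ I → x i = 0) → ∀ i,
      ∑ k : {k // k ∈ I}, A i k * x k = ∑ k, A i k * x k := by
    intro x hx i
    rw [Finset.sum_coe_sort I (fun k => A i k * x k)]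
    exact Finset.sum_subset (Finset.subset_univ I) fun k _ hk => by simp [hx k hk]
  unfold pminor
  rw [← Matrix.exists_mulVec_eq_zero_iff]
  constructor
  · rintro ⟨v, hv, h⟩
    let x : Fin n → ℤ := fun i => if hi : i ∈ I then v ⟨i, hi⟩ else 0
    have hxv : ∀ k : {k // k ∈ I}, x k = v k := fun k => by simp [x]
    have hx0 : ∀ i, i ∉ I → x i = 0 := fun i hi => by simp [x, hi]
    refine ⟨x, ?_, hx0, fun i hi => ?_⟩
    · intro hx
      exact hv (funext fun k => by rw [← hxv, hx]; rfl)
    · rw [← key x hx0]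
      simpa [hxv, Matrix.mulVec, dotProduct] using congrFun h ⟨i, hi⟩
  · rintro ⟨x, hx, hx0, h⟩
    refine ⟨fun k => x k, ?_, ?_⟩
    · intro hv
      refine hx (funext fun i => ?_)
      by_cases hi : i ∈ I
      · exact congrFun hv ⟨i, hi⟩
      · exact hx0 i hi
    · funext i
      exact (key x hx0 i).trans (h i i.2)

lemma pminor_transpose {n : ℕ} (A : Matrix (Fin n) (Fin n) ℤ) (I : Finset (Fin n)) :
    pminor A.transpose I = pminor A I := by
  unfold pminor
  rw [← Matrix.transpose_submatrix, Matrix.det_transpose]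

/-- The maximum principle: if `Δ_I = 0`, then `I` contains a nonempty closed set of indices. -/
lemma exists_closed_subset {n : ℕ} {A : Matrix (Fin n) (Fin n) ℤ} (hA : A.IsPseudoPrincipal)
    {I : Finset (Fin n)} (hI : pminor A I = 0) :
    ∃ J ⊆ I, J.Nonempty ∧ ∀ i ∈ J, ∀ k, k ∉ J → A i k = 0 := by
  obtain ⟨-, hoff, a, ha, hAa⟩ := hA
  obtain ⟨x, hx, hx0, h⟩ := (pminor_eq_zero_iff A I).1 hI
  obtain ⟨j, hj⟩ := Function.ne_iff.1 hx
  obtain ⟨p, -, hp⟩ := Finset.exists_max_image univ (fun i => (|x i| : ℚ) / a i) ⟨j, mem_univ j⟩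
  have hmax : ∀ i, |x i| * a p ≤ |x p| * a i := by
    intro i
    have h1 := hp i (mem_univ i)
    rw [div_le_div_iff₀ (by exact_mod_cast ha i) (by exact_mod_cast ha p)] at h1
    exact_mod_cast h1
  have hxp : 0 < |x p| := by
    have h1 : 0 < |x p| * a j := (mul_pos (abs_pos.2 hj) (ha p)).trans_le (hmax j)
    exact pos_of_mul_pos_left h1 (ha j).le
  -- `z` measures the failure of maximality, so its zero set is where `|x i| / a i` is maximal
  let z : Fin n → ℤ := fun i => |x p| * a i - |x i| * a p
  have hz : ∀ i, 0 ≤ z i := fun i => sub_nonneg.2 (hmax i)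
  have hJI : ∀ i, z i = 0 → i ∈ I := by
    intro i hi
    by_contra hiI
    have h1 := mul_pos hxp (ha i)
    simp only [z, hx0 i hiI, abs_zero, zero_mul, sub_zero] at hi
    omega
  refine ⟨univ.filter fun i => z i = 0, fun i hi => hJI i (by simpa using hi),
    ⟨p, by simp [z]⟩, ?_⟩
  intro i hi k hk
  simp only [mem_filter, mem_univ, true_and] at hi hk
  -- multiplying `x` by the sign of `x i` makes the comparison with `|x|` exact at `i`
  obtain ⟨s, hs, hle⟩ : ∃ s : ℤ, s * x i = |x i| ∧ ∀ l, s * x l ≤ |x l| := by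
    rcases le_total 0 (x i) with h0 | h0
    · exact ⟨1, by simp [abs_of_nonneg h0], fun l => by simpa using le_abs_self (x l)⟩
    · exact ⟨-1, by simp [abs_of_nonpos h0], fun l => by simpa using neg_le_abs (x l)⟩
  have habs : 0 ≤ ∑ l, A i l * |x l| := by
    calc (0 : ℤ) = s * ∑ l, A i l * x l := by rw [h i (hJI i hi), mul_zero]
      _ = ∑ l, A i l * (s * x l) := by
        rw [mul_sum]; exact sum_congr rfl fun l _ => by ring
      _ ≤ ∑ l, A i l * |x l| := by
        refine sum_le_sum fun l _ => ?_
        by_cases hl : i = l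
        · subst hl; rw [hs]
        · exact mul_le_mul_of_nonneg_left (hle l) (hoff i l hl)
  have hAai : ∑ l, A i l * a l = 0 := by
    simpa [Matrix.mulVec, dotProduct] using congrFun hAa i
  have hsum : ∑ l, A i l * z l = |x p| * ∑ l, A i l * a l - a p * ∑ l, A i l * |x l| := by
    rw [mul_sum, mul_sum, ← sum_sub_distrib]
    exact sum_congr rfl fun l _ => by simp only [z]; ring
  have hnn : ∀ l ∈ univ, 0 ≤ A i l * z l := by
    intro l _
    by_cases hl : i = l
    · subst hl; simp [hi]
    · exact mul_nonneg (hoff i l hl) (hz l)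
  have hzero : ∑ l, A i l * z l = 0 := by
    refine le_antisymm ?_ (sum_nonneg hnn)
    rw [hsum, hAai, mul_zero, zero_sub]
    exact neg_nonpos.2 (mul_nonneg (ha p).le habs)
  exact (mul_eq_zero.1 ((sum_eq_zero_iff_of_nonneg hnn).1 hzero k (mem_univ k))).resolve_right hk

/-- Closedness makes the minor on `J` vanish, and a left kernel vector on `J` extends by zero to a
left kernel vector of `A`. -/
lemma pminor_eq_zero_of_closed {n : ℕ} {A : Matrix (Fin n) (Fin n) ℤ} (hA : A.IsPseudoPrincipal)
    {J K : Finset (Fin n)} (hJK : J ⊆ K) (hJ : J.Nonempty)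
    (hcl : ∀ i ∈ J, ∀ k, k ∉ J → A i k = 0) : pminor A K = 0 := by
  obtain ⟨-, -, a, ha, hAa⟩ := hA
  obtain ⟨p, hp⟩ := hJ
  have hJ0 : pminor A J = 0 := by
    refine (pminor_eq_zero_iff A J).2 ⟨fun i => if i ∈ J then a i else 0, ?_, ?_, ?_⟩
    · intro h0
      have h1 := congrFun h0 p
      simp only [hp, if_true, Pi.zero_apply] at h1
      exact (ha p).ne' h1
    · intro i hi
      simp [hi]
    · intro i hi
      have h1 : ∑ k, A i k * a k = 0 := by
        simpa [Matrix.mulVec, dotProduct] using congrFun hAa i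
      rw [← h1]
      refine sum_congr rfl fun k _ => ?_
      by_cases hk : k ∈ J
      · simp [hk]
      · simp [hk, hcl i hi k hk]
  rw [← pminor_transpose] at hJ0 ⊢
  obtain ⟨y, hy, hy0, h⟩ := (pminor_eq_zero_iff _ J).1 hJ0
  refine (pminor_eq_zero_iff _ K).2 ⟨y, hy, fun i hi => hy0 i fun hiJ => hi (hJK hiJ), ?_⟩
  intro k _
  by_cases hk : k ∈ J
  · exact h k hk
  · refine sum_eq_zero fun i _ => ?_
    by_cases hi : i ∈ J
    · simp [hcl i hi k hk]
    · simp [hy0 i hi]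


/-- if a principal minor of a pseudo principal matrix vanishes, then
so does every principal minor obtained by enlarging the index set by one element. -/
theorem pminor_insert_eq_zero_of_isPseudoPrincipal {n : ℕ} (A : Matrix (Fin n) (Fin n) ℤ)
    (hA : A.IsPseudoPrincipal) (I : Finset (Fin n)) (hI : pminor A I = 0) :
    ∀ j : Fin n, pminor A (insert j I) = 0 := by
  intro j
  obtain ⟨J, hJI, hJ, hcl⟩ := exists_closed_subset hA hI
  exact pminor_eq_zero_of_closed hA (hJI.trans (Finset.subset_insert j I)) hJ hcl
end

section
/- Let A be an n×n pseudo principal matrix of rank r. Then there exists a subset I ⊆ {1,…,n} with |I| = r such that the principal minor Δ_I is nonzero. -/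
/-- Maximum principle for matrices with nonnegative off-diagonal entries and zero row sums. -/
lemma mulVec_nonpos_of_isMax {n : ℕ} {B : Matrix (Fin n) (Fin n) ℚ}
    (hoff : ∀ i j, i ≠ j → 0 ≤ B i j) (hrow : ∀ i, ∑ j, B i j = 0)
    (u : Fin n → ℚ) (i : Fin n) (hi : ∀ j, u j ≤ u i) : B.mulVec u i ≤ 0 := by
  have h : B.mulVec u i = ∑ j, B i j * (u j - u i) := by
    simp only [mul_sub, Finset.sum_sub_distrib, ← Finset.sum_mul, hrow, zero_mul, sub_zero]
    rfl
  rw [h]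
  refine Finset.sum_nonpos fun j _ => ?_
  rcases eq_or_ne i j with rfl | hij
  · simp
  · exact mul_nonpos_of_nonneg_of_nonpos (hoff i j hij) (sub_nonpos.mpr (hi j))

/-- One half of the semisimplicity of `0`: if `w = B v` had a positive entry, then `v + t • w` for
large `t` would attain its maximum where `w` is positive, although `B (v + t • w) = w`. -/
lemma mulVec_nonpos_of_sq {n : ℕ} {B : Matrix (Fin n) (Fin n) ℚ}
    (hoff : ∀ i j, i ≠ j → 0 ≤ B i j) (hrow : ∀ i, ∑ j, B i j = 0)
    (v : Fin n → ℚ) (hv : B.mulVec (B.mulVec v) = 0) (j : Fin n) : B.mulVec v j ≤ 0 := by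
  by_contra! hj
  set w := B.mulVec v with hw
  have : Nonempty (Fin n) := ⟨j⟩
  obtain ⟨k, hk⟩ := Finite.exists_max v
  -- `t` is chosen so that `v + t • w` exceeds every entry of `v` at the index `j`.
  set t : ℚ := (v k - v j + 1) / w j with ht
  have ht0 : 0 ≤ t := div_nonneg (by linarith [hk j]) hj.le
  have htj : t * w j = v k - v j + 1 := div_mul_cancel₀ _ hj.ne'
  obtain ⟨i, hi⟩ := Finite.exists_max (v + t • w)
  have h1 := mulVec_nonpos_of_isMax hoff hrow _ i hi
  rw [Matrix.mulVec_add, Matrix.mulVec_smul, hv, smul_zero, add_zero, ← hw] at h1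
  have h2 := hi j
  simp only [Pi.add_apply, Pi.smul_apply, smul_eq_mul] at h2
  have h3 : t * w i ≤ 0 := mul_nonpos_of_nonneg_of_nonpos ht0 h1
  linarith [hk i]

/-- The eigenvalue `0` of a matrix with nonnegative off-diagonal entries and zero row sums is
semisimple. -/
lemma mulVec_eq_zero_of_sq {n : ℕ} {B : Matrix (Fin n) (Fin n) ℚ}
    (hoff : ∀ i j, i ≠ j → 0 ≤ B i j) (hrow : ∀ i, ∑ j, B i j = 0)
    (v : Fin n → ℚ) (hv : B.mulVec (B.mulVec v) = 0) : B.mulVec v = 0 := by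
  funext j
  refine le_antisymm (mulVec_nonpos_of_sq hoff hrow v hv j) ?_
  have h := mulVec_nonpos_of_sq hoff hrow (-v) (by simp [Matrix.mulVec_neg, hv]) j
  simpa [Matrix.mulVec_neg] using h

/-- A matrix for which the eigenvalue `0` is semisimple has a nonzero principal minor whose size
is the rank. -/
lemma exists_minor_of_semisimple_zero {n : ℕ} (B : Matrix (Fin n) (Fin n) ℚ)
    (hB : ∀ v, B.mulVec (B.mulVec v) = 0 → B.mulVec v = 0) :
    ∃ I : Finset (Fin n), I.card = B.rank ∧
      (B.submatrix (Subtype.val : I → Fin n) (Subtype.val : I → Fin n)).det ≠ 0 := by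
  have hpow : ∀ (k : ℕ) (v : Fin n → ℚ), (B.mulVecLin ^ k) v = 0 → B.mulVecLin v = 0 := by
    intro k
    induction k with
    | zero => intro v hv; rw [pow_zero, Module.End.one_apply] at hv; rw [hv, map_zero]
    | succ k ih =>
      intro v hv
      rw [pow_succ, Module.End.mul_apply] at hv
      exact hB v (ih _ hv)
  have hmax : Module.End.maxGenEigenspace B.mulVecLin 0 = LinearMap.ker B.mulVecLin := by
    ext v
    simp only [Module.End.mem_maxGenEigenspace, zero_smul, sub_zero, LinearMap.mem_ker]
    exact ⟨fun ⟨k, hk⟩ => hpow k v hk, fun h => ⟨1, by rwa [pow_one]⟩⟩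
  have hdeg := LinearMap.finrank_maxGenEigenspace_zero_eq B.mulVecLin
  rw [hmax, Matrix.charpoly_mulVecLin] at hdeg
  have hrn : B.rank + B.charpoly.natTrailingDegree = n := by
    rw [← hdeg, Matrix.rank, LinearMap.finrank_range_add_finrank_ker, Module.finrank_fin_fun]
  have hc : B.charpoly.coeff (Fintype.card (Fin n) - B.rank) ≠ 0 := by
    have : Fintype.card (Fin n) - B.rank = B.charpoly.natTrailingDegree := by
      rw [Fintype.card_fin]; omega
    rw [this]
    exact Polynomial.coeff_natTrailingDegree_ne_zero.mpr B.charpoly_monic.ne_zero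
  rw [Matrix.charpoly_coeff_eq_sum_minors B B.rank (by rw [Fintype.card_fin]; omega)] at hc
  obtain ⟨I, hI, hne⟩ := Finset.exists_ne_zero_of_sum_ne_zero (right_ne_zero_of_mul hc)
  exact ⟨I, (Finset.mem_powersetCard.mp hI).2, hne⟩

/-- a pseudo principal matrix of rank `r` (over ℚ) has a nonzero
principal minor of size `r`. -/
theorem exists_nonzero_pminor_of_isPseudoPrincipal {n : ℕ} (A : Matrix (Fin n) (Fin n) ℤ)
    (hA : A.IsPseudoPrincipal) (r : ℕ)
    (hrank : (A.map (Int.cast : ℤ → ℚ)).rank = r) :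
    ∃ I : Finset (Fin n), I.card = r ∧ pminor A I ≠ 0 := by
  obtain ⟨-, hoff, a, ha, hAa⟩ := hA
  set d : Fin n → ℚ := fun i => (a i : ℚ) with hd
  set B : Matrix (Fin n) (Fin n) ℚ := A.map (Int.cast : ℤ → ℚ) * Matrix.diagonal d with hB
  have hBij : ∀ i j, B i j = (A i j : ℚ) * (a j : ℚ) := fun i j => by
    rw [hB, Matrix.mul_diagonal, Matrix.map_apply]
  have hBoff : ∀ i j, i ≠ j → 0 ≤ B i j := fun i j hij => by
    rw [hBij]
    exact_mod_cast mul_nonneg (hoff i j hij) (ha j).le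
  have hBrow : ∀ i, ∑ j, B i j = 0 := fun i => by
    simp only [hBij]
    exact_mod_cast congrFun hAa i
  have hBrank : B.rank = r := by
    rw [hB, Matrix.rank_mul_eq_left_of_isUnit_det, hrank]
    rw [Matrix.det_diagonal, isUnit_iff_ne_zero, Finset.prod_ne_zero_iff]
    exact fun i _ => Int.cast_ne_zero.mpr (ha i).ne'
  obtain ⟨I, hI, hne⟩ := exists_minor_of_semisimple_zero B (mulVec_eq_zero_of_sq hBoff hBrow)
  refine ⟨I, hI.trans hBrank, fun h0 => hne ?_⟩
  have hsub : B.submatrix (Subtype.val : I → Fin n) (Subtype.val : I → Fin n) =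
      (A.submatrix (Subtype.val : I → Fin n) (Subtype.val : I → Fin n)).map (Int.cast : ℤ → ℚ) *
        Matrix.diagonal fun i : I => d i := by
    ext i j
    rw [Matrix.mul_diagonal, Matrix.submatrix_apply, hBij]
    rfl
  have hdet : (A.submatrix (Subtype.val : I → Fin n) (Subtype.val : I → Fin n)).det = 0 := h0
  rw [hsub, Matrix.det_mul, ← Int.cast_det, hdet, Int.cast_zero, zero_mul]
end

section
/- Let A be an n×n integer matrix and let r be an integer with 1 ≤ r ≤ n such that Δ_{{1,…,i}} ≠ 0 for all i ≤ r−1. Define an n×n integer matrix Â(r) as follows: for 1 ≤ p ≤ r−1, the entry Â(r)_{pq} is 0 if q < p, and is the determinant of the submatrix of A with rows 1,…,p (in order) and columns 1,…,p−1 followed by q if q ≥ p; for r ≤ p ≤ n, the entry Â(r)_{pq} is 0 if q < r, and is the determinant of the submatrix of A with rows 1,…,r−1 followed by p and columns 1,…,r−1 followed by q if q ≥ r. Then there exists an invertible n×n matrix M with rational entries such that M·A = Â(r). Moreover, for every s ≤ r, the leading principal s×s minor of Â(r) equals the product ∏_{i=1}^{s} Δ_{{1,…,i}}(A). -/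
/-- The matrix `Â(r)` obtained from `A` by the fraction-free Gaussian elimination of
Lemma 2.7 (1-based rows `p` and columns `q`):
for `p ≤ r - 1` the `(p,q)` entry is `0` when `q < p` and is the minor of `A` on rows
`1,…,p` and columns `1,…,p-1,q` when `q ≥ p`; for `p ≥ r` it is `0` when `q < r` and is
the minor of `A` on rows `1,…,r-1,p` and columns `1,…,r-1,q` when `q ≥ r`. -/
def hatMatrix {n : ℕ} (A : Matrix (Fin n) (Fin n) ℤ) (r : ℕ) (hr : r ≤ n) :
    Matrix (Fin n) (Fin n) ℤ := Matrix.of fun i j =>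
  if (i : ℕ) < r - 1 then
    if (j : ℕ) < (i : ℕ) then 0
    else (A.submatrix (Fin.castLE i.isLt)
      (Fin.snoc (fun l : Fin (i : ℕ) => Fin.castLE (le_of_lt i.isLt) l) j)).det
  else
    if (j : ℕ) < r - 1 then 0
    else (A.submatrix
      (Fin.snoc (fun l : Fin (r - 1) => Fin.castLE (le_trans (Nat.sub_le r 1) hr) l) i)
      (Fin.snoc (fun l : Fin (r - 1) => Fin.castLE (le_trans (Nat.sub_le r 1) hr) l) j)).det

/-- The index list `0, …, m - 1, i`. -/
def borderIdx {n : ℕ} (m : ℕ) (hm : m ≤ n) (i : Fin n) : Fin (m + 1) → Fin n :=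
  Fin.snoc (fun l : Fin m => Fin.castLE hm l) i

/-- The minor of `A` on rows `0, …, m - 1, i` and columns `0, …, m - 1, j`. -/
def borderMinor {n : ℕ} (A : Matrix (Fin n) (Fin n) ℤ) (m : ℕ) (hm : m ≤ n) (i j : Fin n) : ℤ :=
  (A.submatrix (borderIdx m hm i) (borderIdx m hm j)).det

/-- The coefficient of `A l j` in the Laplace expansion of `borderMinor A m hm i j` along its last
column. It is a sum over positions `k` because row `l` occurs twice in the list when `l = i < m`.
The cofactors use columns `0, …, m - 1`, so `j` does not enter. -/
def elimCoeff {n : ℕ} (A : Matrix (Fin n) (Fin n) ℤ) (m : ℕ) (hm : m ≤ n) (i l : Fin n) : ℤ :=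
  ∑ k : Fin (m + 1), if borderIdx m hm i k = l then
    (-1) ^ ((k : ℕ) + m) *
      (A.submatrix (fun x => borderIdx m hm i (k.succAbove x)) (Fin.castLE hm)).det
  else 0

theorem pminor_leading {n : ℕ} (A : Matrix (Fin n) (Fin n) ℤ) (m : ℕ) (hm : m ≤ n) :
    pminor A (Finset.univ.filter fun x : Fin n => (x : ℕ) < m) =
      (A.submatrix (Fin.castLE hm) (Fin.castLE hm)).det := by
  let e : Fin m ≃ {x : Fin n // x ∈ Finset.univ.filter fun x : Fin n => (x : ℕ) < m} :=
    { toFun := fun x => ⟨Fin.castLE hm x, by simp⟩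
      invFun := fun x => ⟨x.1, (Finset.mem_filter.mp x.2).2⟩
      left_inv := fun x => rfl
      right_inv := fun x => rfl }
  rw [pminor, ← Matrix.det_submatrix_equiv_self e, Matrix.submatrix_submatrix]
  rfl

theorem borderIdx_castSucc {n : ℕ} (m : ℕ) (hm : m ≤ n) (i : Fin n) (k : Fin m) :
    borderIdx m hm i k.castSucc = Fin.castLE hm k := by
  simp [borderIdx]

theorem borderIdx_last {n : ℕ} (m : ℕ) (hm : m ≤ n) (i : Fin n) :
    borderIdx m hm i (Fin.last m) = i := by
  simp [borderIdx]

theorem borderIdx_self {n : ℕ} (i : Fin n) :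
    borderIdx (i : ℕ) i.isLt.le i = Fin.castLE i.isLt := by
  funext k
  refine Fin.lastCases ?_ (fun k => ?_) k
  · rw [borderIdx_last]; rfl
  · rw [borderIdx_castSucc]; rfl

theorem borderMinor_eq_zero {n : ℕ} (A : Matrix (Fin n) (Fin n) ℤ) (m : ℕ) (hm : m ≤ n)
    (i j : Fin n) (hj : (j : ℕ) < m) : borderMinor A m hm i j = 0 := by
  refine Matrix.det_zero_of_column_eq (i := Fin.castSucc ⟨j, hj⟩) (j := Fin.last m)
    (Fin.castSucc_lt_last _).ne fun k => ?_
  simp only [Matrix.submatrix_apply, borderIdx_castSucc, borderIdx_last]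
  rfl

theorem hatMatrix_apply {n : ℕ} (A : Matrix (Fin n) (Fin n) ℤ) (r : ℕ) (hr : r ≤ n)
    (i j : Fin n) : hatMatrix A r hr i j =
      borderMinor A (min (i : ℕ) (r - 1)) ((min_le_left _ _).trans i.isLt.le) i j := by
  by_cases h : (i : ℕ) < r - 1
  · have hm : min (i : ℕ) (r - 1) = i := min_eq_left h.le
    simp only [hatMatrix, Matrix.of_apply, if_pos h, hm]
    split_ifs with hj
    · rw [borderMinor_eq_zero A _ _ i j hj]
    · rw [borderMinor, borderIdx_self]; rfl
  · have hm : min (i : ℕ) (r - 1) = r - 1 := min_eq_right (not_lt.mp h)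
    simp only [hatMatrix, Matrix.of_apply, if_neg h, hm]
    split_ifs with hj
    · rw [borderMinor_eq_zero A _ _ i j hj]
    · rfl

theorem elimCoeff_mul {n : ℕ} (A : Matrix (Fin n) (Fin n) ℤ) (m : ℕ) (hm : m ≤ n)
    (i j : Fin n) : ∑ l, elimCoeff A m hm i l * A l j = borderMinor A m hm i j := by
  rw [borderMinor, Matrix.det_succ_column _ (Fin.last m)]
  simp only [elimCoeff, Finset.sum_mul]
  rw [Finset.sum_comm]
  refine Finset.sum_congr rfl fun k _ => ?_
  simp only [ite_mul, zero_mul, Finset.sum_ite_eq, Finset.mem_univ, if_true,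
    Matrix.submatrix_apply, borderIdx_last, Matrix.submatrix_submatrix, Fin.val_last]
  have hc : borderIdx m hm j ∘ (Fin.last m).succAbove = Fin.castLE hm := by
    funext x
    simp [Fin.succAbove_last, borderIdx_castSucc]
  rw [hc, mul_right_comm]
  rfl

theorem elimCoeff_eq_zero {n : ℕ} (A : Matrix (Fin n) (Fin n) ℤ) (m : ℕ) (hm : m ≤ n)
    (i l : Fin n) (hmi : m ≤ i) (hl : i < l) : elimCoeff A m hm i l = 0 := by
  refine Finset.sum_eq_zero fun k _ => if_neg ?_
  refine Fin.lastCases ?_ (fun k => ?_) k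
  · rw [borderIdx_last]; exact hl.ne
  · rw [borderIdx_castSucc]
    intro h
    have h1 := congrArg Fin.val h
    have h2 := k.isLt
    simp only [Fin.val_castLE] at h1
    have h3 : (i : ℕ) < l := hl
    omega

theorem elimCoeff_self {n : ℕ} (A : Matrix (Fin n) (Fin n) ℤ) (m : ℕ) (hm : m ≤ n)
    (i : Fin n) (hmi : m ≤ i) : elimCoeff A m hm i i =
      pminor A (Finset.univ.filter fun x : Fin n => (x : ℕ) < m) := by
  rw [pminor_leading A m hm, elimCoeff, Finset.sum_eq_single (Fin.last m)]
  · rw [if_pos (borderIdx_last m hm i), Fin.val_last, Even.neg_one_pow ⟨m, rfl⟩, one_mul]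
    congr 2
    funext x
    rw [Fin.succAbove_last, borderIdx_castSucc]
  · intro k _ hk
    refine if_neg fun h => ?_
    obtain ⟨k, rfl⟩ := Fin.exists_castSucc_eq.mpr hk
    rw [borderIdx_castSucc] at h
    have h1 := congrArg Fin.val h
    have h2 := k.isLt
    simp only [Fin.val_castLE] at h1
    omega
  · simp

/-- if the leading principal minors `Δ_{{1,…,i}}` of `A` are nonzero for
all `i ≤ r - 1`, then `Â(r)` is obtained from `A` by an invertible (over ℚ) sequence of
row operations, and for `s ≤ r` the leading principal `s × s` minor of `Â(r)` is the
product `∏_{i=1}^s Δ_{{1,…,i}}(A)`. -/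
theorem elimination_lemma {n : ℕ} (A : Matrix (Fin n) (Fin n) ℤ) (r : ℕ)
    (hr1 : 1 ≤ r) (hrn : r ≤ n)
    (hΔ : ∀ i : ℕ, 1 ≤ i → i ≤ r - 1 →
      pminor A (Finset.univ.filter fun x : Fin n => (x : ℕ) < i) ≠ 0) :
    (∃ M : Matrix (Fin n) (Fin n) ℚ, IsUnit M.det ∧
        M * A.map (Int.cast : ℤ → ℚ) = (hatMatrix A r hrn).map (Int.cast : ℤ → ℚ)) ∧
      ∀ s : ℕ, ∀ hs : s ≤ r,
        ((hatMatrix A r hrn).submatrix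
            (Fin.castLE (le_trans hs hrn)) (Fin.castLE (le_trans hs hrn))).det =
          ∏ i ∈ Finset.range s,
            pminor A (Finset.univ.filter fun x : Fin n => (x : ℕ) < i + 1) := by
  constructor
  · have hmn : ∀ i : Fin n, min (i : ℕ) (r - 1) ≤ n := fun i =>
      (min_le_left _ _).trans i.isLt.le
    let M : Matrix (Fin n) (Fin n) ℤ :=
      Matrix.of fun i l => elimCoeff A (min (i : ℕ) (r - 1)) (hmn i) i l
    have hMA : M * A = hatMatrix A r hrn := by
      ext i j
      rw [Matrix.mul_apply, hatMatrix_apply]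
      exact elimCoeff_mul A _ (hmn i) i j
    have hM : M.det ≠ 0 := by
      have ht : M.BlockTriangular OrderDual.toDual := fun i l hl =>
        elimCoeff_eq_zero A _ (hmn i) i l (min_le_left _ _) hl
      rw [Matrix.det_of_isLowerTriangular M ht]
      refine Finset.prod_ne_zero_iff.mpr fun i _ => ?_
      change elimCoeff A (min (i : ℕ) (r - 1)) (hmn i) i i ≠ 0
      rw [elimCoeff_self A _ (hmn i) i (min_le_left _ _)]
      rcases Nat.eq_zero_or_pos (min (i : ℕ) (r - 1)) with h0 | h0
      · -- The hypothesis omits the empty minor, which is `1`.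
        rw [h0, pminor_leading A 0 (Nat.zero_le n), Matrix.det_fin_zero]
        exact one_ne_zero
      · exact hΔ _ h0 (min_le_right _ _)
    refine ⟨M.map (Int.cast : ℤ → ℚ), ?_, ?_⟩
    · have hdet : (M.map (Int.cast : ℤ → ℚ)).det = (M.det : ℚ) :=
        ((Int.castRingHom ℚ).map_det M).symm
      rw [hdet, isUnit_iff_ne_zero]
      exact_mod_cast hM
    · rw [← hMA]
      exact (Matrix.map_mul (f := Int.castRingHom ℚ)).symm
  · intro s hs
    have hle : ∀ i : Fin s, min (i : ℕ) (r - 1) = i := fun i =>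
      min_eq_left (by have := i.isLt; omega)
    rw [Matrix.det_of_isUpperTriangular, ← Fin.prod_univ_eq_prod_range
      (fun i => pminor A (Finset.univ.filter fun x : Fin n => (x : ℕ) < i + 1)) s]
    · refine Finset.prod_congr rfl fun i _ => ?_
      rw [Matrix.submatrix_apply, hatMatrix_apply]
      simp only [Fin.val_castLE, hle i]
      have hi : (i : ℕ) + 1 ≤ n := by have := i.isLt; omega
      rw [pminor_leading A _ hi, borderMinor]
      have h := borderIdx_self (Fin.castLE (hs.trans hrn) i)
      simp only [Fin.val_castLE] at h
      rw [h]
    · intro i j hj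
      rw [Matrix.submatrix_apply, hatMatrix_apply]
      refine borderMinor_eq_zero A _ _ _ _ ?_
      simp only [Fin.val_castLE, hle i]
      exact hj
end

section
/- Let R be a commutative ring, let A be an m×n matrix over R, and let r, k, q be integers with 2 ≤ r, r−1 ≤ m, r−1 ≤ n, r ≤ k ≤ m and r ≤ q ≤ n. For lists of row indices and column indices of equal length, write A(rows; cols) for the determinant of the corresponding square submatrix of A with rows and columns taken in the listed order, with the convention that the determinant of the empty matrix is 1. Then det A(1,…,r−1; 1,…,r−1) · det A(1,…,r−2,k; 1,…,r−2,q) − det A(1,…,r−2,k; 1,…,r−1) · det A(1,…,r−1; 1,…,r−2,q) = det A(1,…,r−2; 1,…,r−2) · det A(1,…,r−1,k; 1,…,r−1,q). -/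
/-!
Write `A` for the leading `s × s` block, bordered by two extra rows and two extra columns.
When `det A` is a unit, the Schur complement formula says that the determinant of `A` bordered by
row `i` and column `j` is `det A * S i j`, where `S` is the `2 × 2` Schur complement, while the
full bordered determinant is `det A * det S`; the identity is then the expansion of `det S`
(`block_identity_of_isUnit`). For a general `A`, replace it by `X + A` over `R[X]`: its
determinant is monic, hence not a zero divisor, so `R[X]` embeds in the localization where it is
inverted, and specializing `X = 0` recovers the identity for `A` (`block_identity`). The remaining
work is the translation between lists of indices and block matrices.
-/

namespace SylvesterAux

open Matrix Polynomial

/-- The determinant of `A` bordered by the `i`-th row of `C`, the `j`-th column of `B` and the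
corner entry `D i j`. -/
def border {R : Type*} [CommRing R] {s : ℕ} (A : Matrix (Fin s) (Fin s) R)
    (B : Matrix (Fin s) (Fin 2) R) (C : Matrix (Fin 2) (Fin s) R) (D : Matrix (Fin 2) (Fin 2) R)
    (i j : Fin 2) : R :=
  (fromBlocks A (B.submatrix id (fun _ : Fin 1 => j)) (C.submatrix (fun _ : Fin 1 => i) id)
    (D.submatrix (fun _ : Fin 1 => i) (fun _ : Fin 1 => j))).det

theorem border_map {R S : Type*} [CommRing R] [CommRing S] (φ : R →+* S) {s : ℕ}
    (A : Matrix (Fin s) (Fin s) R)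
    (B : Matrix (Fin s) (Fin 2) R) (C : Matrix (Fin 2) (Fin s) R) (D : Matrix (Fin 2) (Fin 2) R)
    (i j : Fin 2) :
    border (A.map φ) (B.map φ) (C.map φ) (D.map φ) i j = φ (border A B C D i j) := by
  simp only [border, RingHom.map_det, RingHom.mapMatrix_apply, fromBlocks_map, submatrix_map]

theorem block_identity_of_isUnit {R : Type*} [CommRing R] {s : ℕ} (A : Matrix (Fin s) (Fin s) R)
    (B : Matrix (Fin s) (Fin 2) R) (C : Matrix (Fin 2) (Fin s) R) (D : Matrix (Fin 2) (Fin 2) R)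
    (hA : IsUnit A.det) :
    border A B C D 0 0 * border A B C D 1 1 - border A B C D 1 0 * border A B C D 0 1 =
      A.det * (fromBlocks A B C D).det := by
  let _ := A.invertibleOfIsUnitDet hA
  have key : ∀ i j, border A B C D i j = A.det * (D - C * ⅟A * B) i j := by
    intro i j
    rw [border, det_fromBlocks₁₁, det_fin_one]
    simp [Matrix.mul_apply]
  rw [det_fromBlocks₁₁, det_fin_two, key, key, key, key]
  ring

/-- When `det A` is not a zero divisor, `R` embeds in the localization inverting `det A`, where
the previous case applies. -/
theorem block_identity_of_mem_nonZeroDivisors {R : Type*} [CommRing R] {s : ℕ}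
    (A : Matrix (Fin s) (Fin s) R)
    (B : Matrix (Fin s) (Fin 2) R) (C : Matrix (Fin 2) (Fin s) R) (D : Matrix (Fin 2) (Fin 2) R)
    (hA : A.det ∈ nonZeroDivisors R) :
    border A B C D 0 0 * border A B C D 1 1 - border A B C D 1 0 * border A B C D 0 1 =
      A.det * (fromBlocks A B C D).det := by
  let φ := algebraMap R (Localization.Away A.det)
  have hφ : Function.Injective φ :=
    IsLocalization.injective _ (M := Submonoid.powers A.det) (Submonoid.powers_le.mpr hA)
  apply hφ
  have h := block_identity_of_isUnit (A.map φ) (B.map φ) (C.map φ) (D.map φ) (by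
    rw [← RingHom.mapMatrix_apply, ← RingHom.map_det]
    exact IsLocalization.Away.algebraMap_isUnit A.det)
  rw [← fromBlocks_map, ← RingHom.mapMatrix_apply φ A,
    ← RingHom.mapMatrix_apply φ (fromBlocks _ _ _ _),
    ← RingHom.map_det, ← RingHom.map_det] at h
  simpa only [RingHom.mapMatrix_apply, border_map, map_sub, map_mul] using h

/-- The general case: `charmatrix (-A) = X + A` has a monic determinant, and evaluating the
identity for it at `X = 0` gives the identity for `A`. -/
theorem block_identity {R : Type*} [CommRing R] {s : ℕ} (A : Matrix (Fin s) (Fin s) R)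
    (B : Matrix (Fin s) (Fin 2) R) (C : Matrix (Fin 2) (Fin s) R) (D : Matrix (Fin 2) (Fin 2) R) :
    border A B C D 0 0 * border A B C D 1 1 - border A B C D 1 0 * border A B C D 0 1 =
      A.det * (fromBlocks A B C D).det := by
  have h := congrArg (evalRingHom (0 : R)) (block_identity_of_mem_nonZeroDivisors
    (charmatrix (-A)) (B.map Polynomial.C) (C.map Polynomial.C) (D.map Polynomial.C)
    (charpoly_monic (-A)).mem_nonZeroDivisors)
  have hA : (charmatrix (-A)).map (evalRingHom (0 : R)) = A := by
    ext i j
    by_cases hij : i = j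
    · subst hij; simp
    · simp [charmatrix_apply_ne _ _ _ hij]
  have hC : ∀ {a b : Type} (M : Matrix a b R),
      (M.map Polynomial.C).map (evalRingHom (0 : R)) = M := by
    intro a b M; ext i j; simp
  simpa only [map_sub, map_mul, ← border_map, RingHom.map_det, RingHom.mapMatrix_apply,
    fromBlocks_map, hA, hC] using h

theorem snoc_comp_finSumFinEquiv {s : ℕ} {α : Type*} (f : Fin s → α) (x : α) :
    (Fin.snoc f x : Fin (s + 1) → α) ∘ finSumFinEquiv = Sum.elim f (fun _ : Fin 1 => x) := by
  funext i
  rcases i with i | i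
  · exact Fin.snoc_castSucc (α := fun _ => α) x f i
  · have : (finSumFinEquiv (Sum.inr i) : Fin (s + 1)) = Fin.last s := by ext; simp
    simp only [Function.comp, this, Fin.snoc_last, Sum.elim_inr]

theorem snoc_snoc_comp_finSumFinEquiv {s : ℕ} {α : Type*} (f : Fin s → α) (x : Fin 2 → α) :
    (Fin.snoc (Fin.snoc f (x 0) : Fin (s + 1) → α) (x 1) : Fin (s + 2) → α) ∘
      (finSumFinEquiv : Fin s ⊕ Fin 2 ≃ Fin (s + 2)) =
      Sum.elim f x := by
  funext i
  rcases i with i | i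
  · have : (finSumFinEquiv (Sum.inl i) : Fin (s + 2)) = i.castSucc.castSucc := by ext; simp
    simp only [Function.comp, this, Fin.snoc_castSucc, Sum.elim_inl]
  · fin_cases i
    · have : (finSumFinEquiv (Sum.inr 0) : Fin (s + 2)) = (Fin.last s).castSucc := by ext; simp
      simp [Function.comp, this, Fin.snoc_castSucc, Fin.snoc_last, -finSumFinEquiv_apply_right]
    · have : (finSumFinEquiv (Sum.inr 1) : Fin (s + 2)) = Fin.last (s + 1) := by ext; simp
      simp [Function.comp, this, Fin.snoc_last, -finSumFinEquiv_apply_right]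

theorem det_snoc {R : Type*} [CommRing R] {s : ℕ} {α β : Type*} (M : Matrix α β R)
    (f : Fin s → α) (g : Fin s → β) (x : Fin 2 → α) (y : Fin 2 → β) (i j : Fin 2) :
    (M.submatrix (Fin.snoc f (x i) : Fin (s + 1) → α) (Fin.snoc g (y j) : Fin (s + 1) → β)).det =
      border (M.submatrix f g) (M.submatrix f y) (M.submatrix x g) (M.submatrix x y) i j := by
  rw [← det_submatrix_equiv_self finSumFinEquiv, submatrix_submatrix, snoc_comp_finSumFinEquiv,
    snoc_comp_finSumFinEquiv, border]
  congr 1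
  ext a b
  rcases a with a | a <;> rcases b with b | b <;> rfl

theorem det_snoc_snoc {R : Type*} [CommRing R] {s : ℕ} {α β : Type*} (M : Matrix α β R)
    (f : Fin s → α) (g : Fin s → β) (x : Fin 2 → α) (y : Fin 2 → β) :
    (M.submatrix (Fin.snoc (Fin.snoc f (x 0) : Fin (s + 1) → α) (x 1) : Fin (s + 2) → α)
      (Fin.snoc (Fin.snoc g (y 0) : Fin (s + 1) → β) (y 1) : Fin (s + 2) → β)).det =
      (fromBlocks (M.submatrix f g) (M.submatrix f y) (M.submatrix x g) (M.submatrix x y)).det := by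
  rw [← det_submatrix_equiv_self (finSumFinEquiv : Fin s ⊕ Fin 2 ≃ Fin (s + 2)), submatrix_submatrix,
    snoc_snoc_comp_finSumFinEquiv, snoc_snoc_comp_finSumFinEquiv]
  congr 1
  ext a b
  rcases a with a | a <;> rcases b with b | b <;> rfl

/-- The identity for lists of indices. The lists `f'` and `g'` are kept separate from the `snoc`
lists they equal, since initial segments are also described directly by `Fin.castLE`. -/
theorem snoc_identity {R : Type*} [CommRing R] {s : ℕ} {α β : Type*} (M : Matrix α β R)
    (f : Fin s → α) (g : Fin s → β) (x₀ x₁ : α) (y₀ y₁ : β)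
    (f' : Fin (s + 1) → α) (g' : Fin (s + 1) → β)
    (hf : f' = Fin.snoc f x₀) (hg : g' = Fin.snoc g y₀) :
    (M.submatrix f' g').det *
      (M.submatrix (Fin.snoc f x₁ : Fin (s + 1) → α) (Fin.snoc g y₁ : Fin (s + 1) → β)).det -
    (M.submatrix (Fin.snoc f x₁ : Fin (s + 1) → α) (Fin.snoc g y₀ : Fin (s + 1) → β)).det *
      (M.submatrix (Fin.snoc f x₀ : Fin (s + 1) → α) (Fin.snoc g y₁ : Fin (s + 1) → β)).det =
    (M.submatrix f g).det *
      (M.submatrix (Fin.snoc f' x₁ : Fin (s + 2) → α) (Fin.snoc g' y₁ : Fin (s + 2) → β)).det := by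
  subst hf hg
  have h := block_identity (M.submatrix f g) (M.submatrix f ![y₀, y₁]) (M.submatrix ![x₀, x₁] g)
    (M.submatrix ![x₀, x₁] ![y₀, y₁])
  rw [← det_snoc_snoc, ← det_snoc, ← det_snoc, ← det_snoc, ← det_snoc] at h
  exact h

theorem castLE_eq_snoc {s m : ℕ} (h : s + 1 ≤ m) :
    (fun l : Fin (s + 1) => Fin.castLE h l) =
      Fin.snoc (fun l : Fin s => Fin.castLE (Nat.le_of_succ_le h) l) ⟨s, h⟩ := by
  funext i
  refine Fin.lastCases ?_ (fun i => ?_) i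
  · rw [Fin.snoc_last]; rfl
  · rw [Fin.snoc_castSucc]; rfl

end SylvesterAux

/-- a Sylvester-type determinantal identity.  For an `m × n` matrix `A`
over a commutative ring and 1-based indices `r, k, q` with `2 ≤ r`, `r - 1 ≤ m`,
`r - 1 ≤ n`, `r ≤ k ≤ m`, `r ≤ q ≤ n`,
`A(1..r-1;1..r-1)·A(1..r-2,k;1..r-2,q) − A(1..r-2,k;1..r-1)·A(1..r-1;1..r-2,q)
  = A(1..r-2;1..r-2)·A(1..r-1,k;1..r-1,q)`,
where `A(rows;cols)` denotes the minor on the listed rows and columns (in order), and the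
determinant of the empty matrix is `1`. -/
theorem sylvester_identity {R : Type*} [CommRing R] {m n : ℕ}
    (A : Matrix (Fin m) (Fin n) R) (r k q : ℕ)
    (hr : 2 ≤ r) (hrm : r - 1 ≤ m) (hrn : r - 1 ≤ n)
    (hk : r ≤ k) (hkm : k ≤ m) (hq : r ≤ q) (hqn : q ≤ n) :
    (A.submatrix (fun l : Fin (r - 1) => Fin.castLE hrm l)
        (fun l : Fin (r - 1) => Fin.castLE hrn l)).det *
      (A.submatrix
        (Fin.snoc (fun l : Fin (r - 2) => Fin.castLE (by omega) l) ⟨k - 1, by omega⟩)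
        (Fin.snoc (fun l : Fin (r - 2) => Fin.castLE (by omega) l) ⟨q - 1, by omega⟩)).det -
    (A.submatrix
        (Fin.snoc (fun l : Fin (r - 2) => Fin.castLE (by omega) l) ⟨k - 1, by omega⟩)
        (Fin.snoc (fun l : Fin (r - 2) => Fin.castLE (by omega) l) ⟨r - 2, by omega⟩)).det *
      (A.submatrix
        (Fin.snoc (fun l : Fin (r - 2) => Fin.castLE (by omega) l) ⟨r - 2, by omega⟩)
        (Fin.snoc (fun l : Fin (r - 2) => Fin.castLE (by omega) l) ⟨q - 1, by omega⟩)).det =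
    (A.submatrix (fun l : Fin (r - 2) => Fin.castLE (by omega : r - 2 ≤ m) l)
        (fun l : Fin (r - 2) => Fin.castLE (by omega : r - 2 ≤ n) l)).det *
      (A.submatrix
        (Fin.snoc (fun l : Fin (r - 1) => Fin.castLE hrm l) ⟨k - 1, by omega⟩)
        (Fin.snoc (fun l : Fin (r - 1) => Fin.castLE hrn l) ⟨q - 1, by omega⟩)).det := by
  obtain ⟨s, rfl⟩ := Nat.exists_eq_add_of_le' hr
  exact SylvesterAux.snoc_identity A _ _ _ _ _ _ _ _
    (SylvesterAux.castLE_eq_snoc hrm) (SylvesterAux.castLE_eq_snoc hrn)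
end
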